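/- arXiv:2408.04148 — 4 statements merged into one kernel-verified Lean document; each statement's English description precedes it below -/
import Mathlib

section
/- There exist a nonzero finite Borel measure ν on ℝ with ν(ℝ \ 𝕃) = 0 and constants C > 0, M > e such that |ν̂(ξ)| ≤ C·|cos(2πξ)|/log(|ξ|) for all ξ ∈ ℝ with |ξ| ≥ M. -/
open MeasureTheory Filter Set

/-- The Fourier transform of a measure on `ℝ`: `μ̂(ξ) = ∫ e^(−2πiξx) dμ(x)`. -/
noncomputable def fourierT (μ : Measure ℝ) (ξ : ℝ) : ℂ :=
  ∫ x, Complex.exp (((-2 * Real.pi * ξ * x : ℝ) : ℂ) * Complex.I) ∂μ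

lemma geom_bound (θ : ℝ) (N : ℕ) :
    ‖∑ p ∈ Finset.range N, Complex.exp (((-2 * Real.pi * (θ * ((p : ℝ) + 1)) : ℝ) : ℂ) * Complex.I)‖
      * |θ - round θ| ≤ 1 / 2 := by
  set z : ℂ := Complex.exp (((-2 * Real.pi * θ : ℝ) : ℂ) * Complex.I) with hz
  have hzn : ‖z‖ = 1 := Complex.norm_exp_ofReal_mul_I _
  have h1 : ∀ p : ℕ, Complex.exp (((-2 * Real.pi * (θ * ((p : ℝ) + 1)) : ℝ) : ℂ) * Complex.I)
      = z * z ^ p := by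
    intro p
    rw [hz, ← Complex.exp_nat_mul, ← Complex.exp_add]
    congr 1
    push_cast
    ring
  simp_rw [h1]
  rw [← Finset.mul_sum, norm_mul, hzn, one_mul]
  have h2 : ‖∑ p ∈ Finset.range N, z ^ p‖ * ‖z - 1‖ ≤ 2 := by
    rw [← norm_mul, geom_sum_mul]
    calc ‖z ^ N - 1‖ ≤ ‖z ^ N‖ + ‖(1 : ℂ)‖ := norm_sub_le _ _
      _ = 2 := by rw [norm_pow, hzn]; norm_num
  have h3 : 4 * |θ - round θ| ≤ ‖z - 1‖ := by
    have e : z = Complex.exp (Complex.I * ((-(2 * Real.pi * (θ - round θ)) : ℝ) : ℂ)) := by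
      rw [hz, Complex.exp_eq_exp_iff_exists_int]
      refine ⟨- round θ, ?_⟩
      push_cast
      ring
    rw [e, Complex.norm_exp_I_mul_ofReal_sub_one]
    have hr : |θ - round θ| ≤ 1 / 2 := abs_sub_round θ
    have hpi := Real.pi_pos
    have e2 : -(2 * Real.pi * (θ - round θ)) / 2 = -(Real.pi * (θ - round θ)) := by ring
    rw [e2, Real.sin_neg, norm_mul, norm_neg, Real.norm_eq_abs, Real.norm_eq_abs]
    have h4 := Real.mul_abs_le_abs_sin (x := Real.pi * (θ - round θ))
      (by rw [abs_mul, abs_of_pos hpi]; nlinarith)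
    rw [abs_mul, abs_of_pos hpi] at h4
    have e3 : 2 / Real.pi * (Real.pi * |θ - round θ|) = 2 * |θ - round θ| := by field_simp
    rw [e3] at h4
    norm_num
    linarith
  have := norm_nonneg (∑ p ∈ Finset.range N, z ^ p)
  nlinarith

lemma two_pow_card_primeFactors (n : ℕ) (hn : n ≠ 0) : 2 ^ n.primeFactors.card ≤ n := by
  calc 2 ^ n.primeFactors.card ≤ ∏ p ∈ n.primeFactors, p :=
        Finset.pow_card_le_prod _ _ _ fun p hp => (Nat.prime_of_mem_primeFactors hp).two_le
    _ ≤ n := Nat.le_of_dvd (Nat.pos_of_ne_zero hn) (Nat.prod_primeFactors_dvd n)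

lemma card_primeFactors_le (n : ℕ) (hn : n ≠ 0) (x : ℝ) (hx : (n : ℝ) ≤ 2 * x)
    (hL : 1 ≤ Real.log x) (hx0 : 0 < x) : (n.primeFactors.card : ℝ) ≤ 3 * Real.log x := by
  have h1 : ((2 : ℝ) ^ n.primeFactors.card) ≤ 2 * x := by
    refine le_trans ?_ hx
    exact_mod_cast two_pow_card_primeFactors n hn
  have h2 := Real.log_le_log (by positivity) h1
  rw [Real.log_pow, Real.log_mul (by norm_num) hx0.ne'] at h2
  have h3 := Real.log_two_gt_d9
  have h4 := Real.log_two_lt_d9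
  nlinarith

lemma bad_count (S : Finset ℕ) (hS : ∀ q ∈ S, q.Prime) (ξ H : ℝ) (hH : 1 ≤ H) (hξ : H < |ξ|)
    (hL : 1 ≤ Real.log |ξ|) :
    ((S.filter (fun q : ℕ => |ξ - q * round (ξ / q)| < H)).card : ℝ)
      ≤ 9 * H * Real.log |ξ| := by
  classical
  set W : Finset ℤ := Finset.Icc ⌈ξ - H⌉ ⌊ξ + H⌋ with hW
  have hsub : S.filter (fun q : ℕ => |ξ - q * round (ξ / q)| < H)
      ⊆ W.biUnion (fun n => if |ξ - n| < H then n.natAbs.primeFactors else ∅) := by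
    intro q hq
    rw [Finset.mem_filter] at hq
    obtain ⟨hqS, hq⟩ := hq
    have hb := abs_lt.1 hq
    rw [Finset.mem_biUnion]
    refine ⟨q * round (ξ / q), ?_, ?_⟩
    · rw [hW, Finset.mem_Icc, Int.ceil_le, Int.le_floor]
      push_cast
      constructor <;> linarith
    · have hq' : |ξ - ((q * round (ξ / q) : ℤ) : ℝ)| < H := by push_cast; exact hq
      rw [if_pos hq', Nat.mem_primeFactors]
      refine ⟨hS q hqS, ?_, ?_⟩
      · rw [← Int.natCast_dvd]
        exact Dvd.intro _ rfl
      · intro h0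
        rw [Int.natAbs_eq_zero] at h0
        rw [h0] at hq'
        simp at hq'
        linarith
  have hx0 : 0 < |ξ| := by linarith
  have h1 := Finset.card_le_card hsub
  have h2 : ((W.biUnion (fun n => if |ξ - n| < H then n.natAbs.primeFactors else ∅)).card : ℝ)
      ≤ W.card * (3 * Real.log |ξ|) := by
    calc ((W.biUnion (fun n => if |ξ - n| < H then n.natAbs.primeFactors else ∅)).card : ℝ)
        ≤ ((∑ n ∈ W, (if |ξ - n| < H then n.natAbs.primeFactors else ∅).card : ℕ) : ℝ) := by
          exact_mod_cast Finset.card_biUnion_le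
      _ ≤ ∑ n ∈ W, (3 * Real.log |ξ|) := by
          push_cast
          apply Finset.sum_le_sum
          intro n _
          split_ifs with h
          · apply card_primeFactors_le _ _ _ _ hL hx0
            · intro h0
              rw [Int.natAbs_eq_zero] at h0
              rw [h0] at h
              simp at h
              linarith
            · rw [Nat.cast_natAbs, Int.cast_abs]
              have := abs_sub_abs_le_abs_sub (n : ℝ) ξ
              rw [abs_sub_comm] at this
              linarith
          · rw [Finset.card_empty, Nat.cast_zero]; linarith
      _ = W.card * (3 * Real.log |ξ|) := by simp
  have h3 : (W.card : ℝ) ≤ 3 * H := by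
    rw [hW, Int.card_Icc]
    have : ((⌊ξ + H⌋ + 1 - ⌈ξ - H⌉).toNat : ℝ) ≤ max ((⌊ξ + H⌋ + 1 - ⌈ξ - H⌉ : ℤ) : ℝ) 0 := by
      have : ((⌊ξ + H⌋ + 1 - ⌈ξ - H⌉).toNat : ℤ) = max (⌊ξ + H⌋ + 1 - ⌈ξ - H⌉ : ℤ) 0 :=
        Int.toNat_eq_max _
      exact_mod_cast this.le
    refine this.trans (max_le ?_ (by linarith))
    push_cast
    have := Int.floor_le (ξ + H)
    have := Int.le_ceil (ξ - H)
    linarith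
  have h1' : ((S.filter (fun q : ℕ => |ξ - q * round (ξ / q)| < H)).card : ℝ) ≤
    ((W.biUnion (fun n => if |ξ - n| < H then n.natAbs.primeFactors else ∅)).card : ℝ) := by
    exact_mod_cast h1
  nlinarith

lemma exists_primes (A : ℝ) (R B : ℕ) (hA : 0 ≤ A) : ∃ P : ℕ, B ≤ P ∧ 2 ≤ P ∧
    A * Real.log P ^ 3 ≤ (((Nat.primesLE P).filter (fun q => R ≤ q)).card : ℝ) ∧ 
    0 < ((Nat.primesLE P).filter (fun q => R ≤ q)).card := by
  have h4 := (Real.isLittleO_pow_log_id_atTop (n := 4)).bound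
    (show (0 : ℝ) < Real.log 2 / (A + R + 4) by positivity)
  have h5 := h4.and (Real.tendsto_log_atTop.eventually_ge_atTop 1)
  have h6 := (tendsto_natCast_atTop_atTop (R := ℝ)).eventually h5
  obtain ⟨P, ⟨hP1, hP2⟩, hP3⟩ := (h6.and (eventually_ge_atTop (B + 2))).exists
  refine ⟨P, by omega, by omega, ?_⟩
  set L := Real.log P with hL
  have hP0 : (2 : ℝ) ≤ P := by exact_mod_cast (by omega : 2 ≤ P)
  rw [Real.norm_of_nonneg (by positivity), id, Real.norm_of_nonneg (by positivity)] at hP1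
  have hlog : Real.log (P + 1) ≤ 2 * L := by
    have : Real.log (P + 1) ≤ Real.log (P ^ 2) :=
      Real.log_le_log (by positivity) (by nlinarith)
    rw [Real.log_pow] at this
    exact_mod_cast this
  have hpi := Chebyshev.pi_ge P
  rw [div_le_iff₀ (by linarith)] at hpi
  have hP1' : L ^ 4 * (A + R + 4) ≤ P * Real.log 2 := by
    calc L ^ 4 * (A + R + 4) ≤ (Real.log 2 / (A + R + 4) * P) * (A + R + 4) := by gcongr
      _ = P * Real.log 2 := by field_simp
  have hcard : (Nat.primesLE P).card ≤ ((Nat.primesLE P).filter (fun q => R ≤ q)).card + R := by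
    rw [← Finset.card_filter_add_card_filter_not (s := Nat.primesLE P) (fun q => R ≤ q)]
    gcongr
    calc _ ≤ (Finset.range R).card := by
          apply Finset.card_le_card
          intro q hq
          simp at hq ⊢
          exact hq.2
      _ = R := by simp
  rw [Nat.primesLE_card_eq_primeCounting] at hcard
  set s := ((Nat.primesLE P).filter (fun q => R ≤ q)).card
  have hcard' : (Nat.primeCounting P : ℝ) ≤ s + R := by exact_mod_cast hcard
  have hL4 : L ≤ L ^ 4 := le_self_pow₀ hP2 (by norm_num)
  have key : (A * L ^ 3 + 2) * L ≤ s * L := by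
    have : (Nat.primeCounting P : ℝ) * L ≤ (s + R) * L := by gcongr
    have hR : (R : ℝ) * L ≤ R * L ^ 4 := by gcongr
    nlinarith
  have key2 := le_of_mul_le_mul_right key (by linarith)
  have h0 : 0 ≤ A * L ^ 3 := by positivity
  refine ⟨by linarith, ?_⟩
  have : (0 : ℝ) < s := by linarith
  exact_mod_cast this

/-- The average of uniform measures on `{1/q, ..., N_q/q}` for `q ∈ S`. -/
noncomputable def rhoM (S : Finset ℕ) (N : ℕ → ℕ) : Measure ℝ :=
  ∑ q ∈ S, ∑ p ∈ Finset.range (N q),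
    ENNReal.ofReal (1 / (S.card * N q)) • Measure.dirac (((p : ℝ) + 1) / q)

lemma rhoM_prob (S : Finset ℕ) (N : ℕ → ℕ) (hS : 0 < S.card) (hN : ∀ q ∈ S, 0 < N q) :
    IsProbabilityMeasure (rhoM S N) := by
  constructor
  have hS' : (S.card : ℝ) ≠ 0 := by positivity
  have e : (rhoM S N) univ = ∑ q ∈ S, ENNReal.ofReal (1 / S.card) := by
    simp only [rhoM, Measure.coe_finsetSum, Finset.sum_apply, Measure.smul_apply, measure_univ,
      smul_eq_mul, mul_one]
    refine Finset.sum_congr rfl fun q hq => ?_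
    have hNq : (N q : ℝ) ≠ 0 := by have := hN q hq; positivity
    rw [← ENNReal.ofReal_sum_of_nonneg (fun _ _ => by positivity)]
    congr 1
    rw [Finset.sum_const, Finset.card_range, nsmul_eq_mul]
    field_simp
  rw [e, ← ENNReal.ofReal_sum_of_nonneg (fun _ _ => by positivity), Finset.sum_const, nsmul_eq_mul,
    mul_one_div_cancel hS', ENNReal.ofReal_one]

lemma rhoM_ae (S : Finset ℕ) (N : ℕ → ℕ) (Q : ℝ → Prop)
    (h : ∀ q ∈ S, ∀ p ∈ Finset.range (N q), Q (((p : ℝ) + 1) / q)) : ∀ᵐ x ∂(rhoM S N), Q x := by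
  rw [rhoM, ← Measure.sum_coe_finset, Measure.ae_sum_iff]
  rintro ⟨q, hq⟩
  rw [← Measure.sum_coe_finset, Measure.ae_sum_iff]
  rintro ⟨p, hp⟩
  apply Measure.ae_smul_measure
  rw [ae_dirac_eq]
  exact h q hq p hp

lemma rhoM_fourier (S : Finset ℕ) (N : ℕ → ℕ) (ξ : ℝ) :
    fourierT (rhoM S N) ξ = ∑ q ∈ S, ((1 / (S.card * N q) : ℝ) : ℂ) *
      ∑ p ∈ Finset.range (N q),
        Complex.exp (((-2 * Real.pi * ((ξ / q) * ((p : ℝ) + 1)) : ℝ) : ℂ) * Complex.I) := by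
  have hint : ∀ (c : ℝ) (x : ℝ), Integrable
      (fun x => Complex.exp (((-2 * Real.pi * ξ * x : ℝ) : ℂ) * Complex.I))
      (ENNReal.ofReal c • Measure.dirac x) := by
    intro c x
    apply Integrable.smul_measure _ ENNReal.ofReal_ne_top
    exact integrable_dirac (by simp)
  unfold fourierT rhoM
  rw [integral_finsetSum_measure]
  · refine Finset.sum_congr rfl fun q hq => ?_
    rw [integral_finsetSum_measure (fun p _ => hint _ _), Finset.mul_sum]
    refine Finset.sum_congr rfl fun p hp => ?_
    rw [integral_smul_measure, integral_dirac, ENNReal.toReal_ofReal (by positivity),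
      Complex.real_smul]
    congr 4
    ring
  · intro q hq
    exact integrable_finsetSum_measure.2 fun p _ => hint _ _

lemma step (δ : ℝ) (hδ : 0 < δ) (hδ4 : δ ≤ 1 / 4) (K B : ℕ) :
    ∃ (P : ℕ) (ρ : Measure ℝ), B ≤ P ∧ 2 ≤ P ∧ IsProbabilityMeasure ρ ∧
      (∀ᵐ x ∂ρ, 0 < x ∧ x ≤ δ ∧ ∃ (q : ℕ) (a : ℤ), 1 ≤ q ∧ q ≤ P ∧ (q : ℝ) * x = a) ∧
      ∀ ξ : ℝ, 1 / δ ^ 2 ≤ |ξ| → |ξ| ≤ (P : ℝ) ^ K → ‖fourierT ρ ξ‖ ≤ 2 / Real.log |ξ| := by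
  obtain ⟨P, hBP, hP2, hcard, hpos⟩ := exists_primes (9 * (K : ℝ) ^ 3 / δ) ⌈2 / δ⌉₊ B (by positivity)
  set S := (Nat.primesLE P).filter (fun q => ⌈2 / δ⌉₊ ≤ q) with hSdef
  set N : ℕ → ℕ := fun q => ⌊δ * q⌋₊ with hN
  have hSp : ∀ q ∈ S, q.Prime ∧ q ≤ P ∧ 2 ≤ δ * q := by
    intro q hq
    rw [hSdef, Finset.mem_filter, Nat.mem_primesLE] at hq
    refine ⟨hq.1.2, hq.1.1, ?_⟩
    have := Nat.ceil_le.1 hq.2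
    rw [div_le_iff₀ hδ] at this
    linarith
  have hNq : ∀ q ∈ S, δ * q / 2 ≤ N q ∧ (N q : ℝ) ≤ δ * q := by
    intro q hq
    have h1 := (hSp q hq).2.2
    refine ⟨?_, Nat.floor_le (by linarith)⟩
    have := Nat.lt_floor_add_one (δ * q)
    simp only [hN]
    linarith
  have hNpos : ∀ q ∈ S, 0 < N q := by
    intro q hq
    have : (0 : ℝ) < N q := by linarith [(hNq q hq).1, (hSp q hq).2.2]
    exact_mod_cast this
  refine ⟨P, rhoM S N, hBP, hP2, rhoM_prob S N hpos hNpos, ?_, ?_⟩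
  · apply rhoM_ae
    intro q hq p hp
    have hq0 : (0 : ℝ) < q := by exact_mod_cast (hSp q hq).1.pos
    refine ⟨by positivity, ?_, q, p + 1, (hSp q hq).1.pos, (hSp q hq).2.1, ?_⟩
    · rw [div_le_iff₀ hq0]
      have : ((p : ℝ) + 1) ≤ N q := by exact_mod_cast Finset.mem_range.1 hp
      linarith [(hNq q hq).2]
    · push_cast
      field_simp
  · intro ξ hξ1 hξ2
    set L := Real.log |ξ| with hL
    have hξ16 : 16 ≤ |ξ| := by
      refine le_trans ?_ hξ1
      rw [le_div_iff₀ (by positivity)]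
      nlinarith
    have hξ0 : 0 < |ξ| := by linarith
    have hL1 : 1 ≤ L := by
      rw [hL, Real.le_log_iff_exp_le hξ0]
      linarith [Real.exp_one_lt_d9]
    have hLK : L ≤ K * Real.log P := by
      rw [hL, ← Real.log_pow]
      exact Real.log_le_log hξ0 hξ2
    have hHlt : L / δ < |ξ| := by
      have h1 : L < Real.sqrt |ξ| := by
        have h2 := Real.log_lt_sub_one_of_pos (x := Real.sqrt |ξ| / 2) (by positivity) (by
          have : 4 ≤ Real.sqrt |ξ| := Real.le_sqrt_of_sq_le (by linarith)
          linarith)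
        rw [Real.log_div (by positivity) (by norm_num), Real.log_sqrt hξ0.le] at h2
        have := Real.log_two_lt_d9
        rw [← hL] at h2
        linarith
      have h3 : 1 / δ ≤ Real.sqrt |ξ| := Real.le_sqrt_of_sq_le (by rw [div_pow, one_pow]; exact hξ1)
      calc L / δ = L * (1 / δ) := by ring
        _ < Real.sqrt |ξ| * Real.sqrt |ξ| := by
          apply mul_lt_mul h1 h3 (by positivity) (by positivity)
        _ = |ξ| := Real.mul_self_sqrt hξ0.le
    have hH1 : 1 ≤ L / δ := by
      rw [le_div_iff₀ hδ]; linarith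
    have hbad := bad_count S (fun q hq => (hSp q hq).1) ξ (L / δ) hH1 hHlt hL1
    rw [← hL] at hbad
    have hs0 : (0 : ℝ) < S.card := by exact_mod_cast hpos
    have hbad2 : ((S.filter (fun q : ℕ => |ξ - q * round (ξ / q)| < L / δ)).card : ℝ)
        ≤ S.card / L := by
      rw [le_div_iff₀ (by linarith)]
      calc _ ≤ 9 * (L / δ) * L * L := by gcongr
        _ = 9 / δ * L ^ 3 := by ring
        _ ≤ 9 / δ * (K * Real.log P) ^ 3 := by gcongr
        _ = 9 * (K : ℝ) ^ 3 / δ * Real.log P ^ 3 := by ring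
        _ ≤ _ := hcard
    rw [rhoM_fourier]
    calc _ ≤ ∑ q ∈ S, ((if |ξ - q * round (ξ / q)| < L / δ then (1 : ℝ) / S.card else 0)
          + 1 / (S.card * L)) := by
          apply norm_sum_le_of_le
          intro q hq
          have hq0 : (0 : ℝ) < q := by exact_mod_cast (hSp q hq).1.pos
          have hn0 : (0 : ℝ) < N q := by exact_mod_cast hNpos q hq
          rw [norm_mul, Complex.norm_real, Real.norm_of_nonneg (by positivity)]
          split_ifs with h
          · have : ‖∑ p ∈ Finset.range (N q), Complex.exp
                (((-2 * Real.pi * ((ξ / q) * ((p : ℝ) + 1)) : ℝ) : ℂ) * Complex.I)‖ ≤ N q := by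
              refine (norm_sum_le_of_le _ (fun p _ =>
                (Complex.norm_exp_ofReal_mul_I _).le)).trans ?_
              simp
            calc _ ≤ 1 / (S.card * N q : ℝ) * N q := by gcongr
              _ = (1 : ℝ) / S.card := by field_simp
              _ ≤ _ := by
                have : 0 ≤ 1 / (S.card * L) := by positivity
                linarith
          · rw [zero_add]
            have hg := geom_bound (ξ / q) (N q)
            set G := ‖∑ p ∈ Finset.range (N q), Complex.exp
                (((-2 * Real.pi * ((ξ / q) * ((p : ℝ) + 1)) : ℝ) : ℂ) * Complex.I)‖
            have hG0 : 0 ≤ G := norm_nonneg _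
            have e : |ξ - q * round (ξ / q)| = q * |ξ / q - round (ξ / q)| := by
              rw [← abs_of_pos hq0, ← abs_mul, abs_of_pos hq0]
              congr 1
              field_simp
            rw [not_lt, e, div_le_iff₀ hδ] at h
            have h1 : G * L ≤ N q := by
              have h2 : G * L ≤ G * (q * |ξ / q - round (ξ / q)| * δ) := by gcongr
              have h3 : (G * |ξ / q - round (ξ / q)|) * (q * δ) ≤ 1 / 2 * (q * δ) := by gcongr
              linarith [(hNq q hq).1]
            rw [div_mul_eq_mul_div, one_mul, div_le_div_iff₀ (by positivity) (by positivity)]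
            nlinarith
      _ = ((S.filter (fun q : ℕ => |ξ - q * round (ξ / q)| < L / δ)).card : ℝ) * (1 / S.card)
          + 1 / L := by
          rw [Finset.sum_add_distrib, ← Finset.sum_filter, Finset.sum_const, Finset.sum_const,
            nsmul_eq_mul, nsmul_eq_mul]
          congr 1
          field_simp
      _ ≤ (S.card / L) * (1 / S.card) + 1 / L := by gcongr
      _ = 2 / L := by field_simp; norm_num

lemma exists_seq : ∃ (D P : ℕ → ℕ) (ρ : ℕ → Measure ℝ), D 0 = 2 ∧ (∀ k, D (k + 1) = D k * P k) ∧
    (∀ k, 2 ≤ D k) ∧ (∀ k, D k ≤ P k) ∧ (∀ k, IsProbabilityMeasure (ρ k)) ∧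
    (∀ k, ∀ᵐ x ∂(ρ k), 0 < x ∧ x ≤ 1 / (4 * (D k : ℝ) ^ k) ∧
      ∃ (q : ℕ) (a : ℤ), 1 ≤ q ∧ q ≤ P k ∧ (q : ℝ) * x = a) ∧
    (∀ k, ∀ ξ : ℝ, 16 * (D k : ℝ) ^ (2 * k) ≤ |ξ| → |ξ| ≤ (P k : ℝ) ^ (4 * k + 8) →
      ‖fourierT (ρ k) ξ‖ ≤ 2 / Real.log |ξ|) := by
  have hstep : ∀ (k D : ℕ), ∃ (P : ℕ) (ρ : Measure ℝ), 2 ≤ D → (D ≤ P ∧ 2 ≤ P ∧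
      IsProbabilityMeasure ρ ∧
      (∀ᵐ x ∂ρ, 0 < x ∧ x ≤ 1 / (4 * (D : ℝ) ^ k) ∧
        ∃ (q : ℕ) (a : ℤ), 1 ≤ q ∧ q ≤ P ∧ (q : ℝ) * x = a) ∧
      ∀ ξ : ℝ, 16 * (D : ℝ) ^ (2 * k) ≤ |ξ| → |ξ| ≤ (P : ℝ) ^ (4 * k + 8) →
        ‖fourierT ρ ξ‖ ≤ 2 / Real.log |ξ|) := by
    intro k D
    by_cases hD : 2 ≤ D
    · have hD1 : (1 : ℝ) ≤ D := by exact_mod_cast (by omega : 1 ≤ D)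
      obtain ⟨P, ρ, h1, h2, h3, h4, h5⟩ := step (1 / (4 * (D : ℝ) ^ k)) (by positivity)
        (by
          apply one_div_le_one_div_of_le (by norm_num)
          have := one_le_pow₀ hD1 (n := k)
          linarith) (4 * k + 8) D
      refine ⟨P, ρ, fun _ => ⟨h1, h2, h3, h4, fun ξ hξ => h5 ξ (le_trans (le_of_eq ?_) hξ)⟩⟩
      rw [pow_mul']
      field_simp
      ring
    · exact ⟨0, 0, fun h => absurd h hD⟩
  choose P ρ h using hstep
  let D : ℕ → ℕ := fun k => Nat.rec 2 (fun k D => D * P k D) k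
  have hD0 : D 0 = 2 := rfl
  have hDs : ∀ k, D (k + 1) = D k * P k (D k) := fun k => rfl
  have hD2 : ∀ k, 2 ≤ D k := by
    intro k
    induction k with
    | zero => exact hD0.ge
    | succ k ih =>
      rw [hDs]
      have := (h k (D k) ih).2.1
      nlinarith
  exact ⟨D, fun k => P k (D k), fun k => ρ k (D k), hD0, hDs, hD2, fun k => (h k _ (hD2 k)).1,
    fun k => (h k _ (hD2 k)).2.2.1, fun k => (h k _ (hD2 k)).2.2.2.1,
    fun k => (h k _ (hD2 k)).2.2.2.2⟩

lemma liouville_of_seq (D P : ℕ → ℕ) (hD0 : D 0 = 2) (hDs : ∀ k, D (k + 1) = D k * P k)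
    (hD2 : ∀ k, 2 ≤ D k) (hDP : ∀ k, D k ≤ P k) (x : ℕ → ℝ)
    (hx : ∀ k, 0 < x k ∧ x k ≤ 1 / (4 * (D k : ℝ) ^ k) ∧
      ∃ (q : ℕ) (a : ℤ), 1 ≤ q ∧ q ≤ P k ∧ (q : ℝ) * x k = a) :
    Summable x ∧ ∀ m : ℤ, Liouville (∑' k, x k + m) := by
  have hD2' : ∀ k, (2 : ℝ) ≤ D k := fun k => by exact_mod_cast hD2 k
  have hhalf : ∀ k, 1 / (4 * (D (k + 1) : ℝ) ^ (k + 1)) ≤ 1 / (4 * (D k : ℝ) ^ k) * (1 / 2) := by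
    intro k
    have h1 : (D k : ℝ) ≤ D (k + 1) := by
      have : D k ≤ D (k + 1) := by
        rw [hDs]; nlinarith [hD2 k, hDP k]
      exact_mod_cast this
    have hk := hD2' k
    rw [one_div_mul_one_div]
    apply one_div_le_one_div_of_le (by positivity)
    have : (D k : ℝ) ^ k ≤ (D (k + 1) : ℝ) ^ k := by gcongr
    rw [pow_succ]
    have h0 : (0 : ℝ) ≤ (D k : ℝ) ^ k := by positivity
    nlinarith [hD2' (k + 1)]
  have htail : ∀ k j, x (j + k) ≤ 1 / (4 * (D k : ℝ) ^ k) * (1 / 2) ^ j := by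
    intro k j
    refine (hx (j + k)).2.1.trans ?_
    induction j with
    | zero => simp
    | succ j ih =>
      have h1 := hhalf (j + k)
      rw [show j + 1 + k = j + k + 1 by ring, pow_succ (1 / 2 : ℝ)]
      linarith
  have hgeo : ∀ k, HasSum (fun j : ℕ => 1 / (4 * (D k : ℝ) ^ k) * (1 / 2) ^ j)
      (1 / (4 * (D k : ℝ) ^ k) * 2) := fun k => hasSum_geometric_two.mul_left _
  have hsum : Summable x := by
    refine Summable.of_nonneg_of_le (fun k => (hx k).1.le) (fun j => ?_) (hgeo 0).summable
    exact htail 0 j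
  refine ⟨hsum, fun m n => ?_⟩
  have hden : ∀ k, ∃ (b : ℕ) (a : ℤ), 2 ≤ b ∧ b ≤ D k ∧ (b : ℝ) * ∑ j ∈ Finset.range k, x j = a := by
    intro k
    induction k with
    | zero => exact ⟨2, 0, le_rfl, hD0.ge, by simp⟩
    | succ k ih =>
      obtain ⟨b, a, hb, hbD, hba⟩ := ih
      obtain ⟨q, c, hq, hqP, hqc⟩ := (hx k).2.2
      refine ⟨b * q, q * a + b * c, by nlinarith, ?_, ?_⟩
      · rw [hDs]; exact Nat.mul_le_mul hbD hqP
      · rw [Finset.sum_range_succ]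
        push_cast
        rw [← hba, ← hqc]
        ring
  obtain ⟨b, a, hb, hbD, hba⟩ := hden n
  have hb0 : (0 : ℝ) < b := by exact_mod_cast (by omega : 0 < b)
  have hsplit := hsum.sum_add_tsum_nat_add n
  have hs' : Summable fun j => x (j + n) := (summable_nat_add_iff n).2 hsum
  have hpos : 0 < ∑' j, x (j + n) := hs'.tsum_pos (fun j => (hx _).1.le) 0 (hx _).1
  have hle : ∑' j, x (j + n) ≤ 1 / (4 * (D n : ℝ) ^ n) * 2 :=
    (hs'.tsum_le_tsum (htail n) (hgeo n).summable).trans (hgeo n).tsum_eq.le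
  have e : ∑' k, x k + m - ((a + b * m : ℤ) : ℝ) / ((b : ℤ) : ℝ) = ∑' j, x (j + n) := by
    push_cast
    rw [← hsplit, ← hba]
    field_simp
    ring
  refine ⟨a + b * m, b, by exact_mod_cast hb, ?_, ?_⟩
  · rw [← sub_ne_zero, e]; exact hpos.ne'
  · rw [e, abs_of_pos hpos]
    refine hle.trans_lt ?_
    have hbD' : (b : ℝ) ≤ D n := by exact_mod_cast hbD
    have hp : ((b : ℤ) : ℝ) ^ n ≤ (D n : ℝ) ^ n := by push_cast; gcongr
    have hp0 : (0 : ℝ) < ((b : ℤ) : ℝ) ^ n := by push_cast; positivity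
    have e4 : 1 / (4 * (D n : ℝ) ^ n) * 2 = 1 / (2 * (D n : ℝ) ^ n) := by
      have := hD2' n
      field_simp
      norm_num
    rw [e4]
    apply one_div_lt_one_div_of_lt hp0
    linarith

lemma prod_bound (ρ : ℕ → Measure ℝ) [∀ k, IsProbabilityMeasure (ρ k)]
    (hs : ∀ᵐ ω ∂(Measure.infinitePi ρ), Summable ω) :
    AEMeasurable (fun ω : ℕ → ℝ => ∑' k, ω k) (Measure.infinitePi ρ) ∧ ∀ (k : ℕ) (ξ : ℝ),
    ‖∫ ω, Complex.exp (((-2 * Real.pi * ξ * (∑' k, ω k) : ℝ) : ℂ) * Complex.I)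
      ∂(Measure.infinitePi ρ)‖ ≤ ‖fourierT (ρ k) ξ‖ := by
  have hlim : ∀ᵐ ω ∂(Measure.infinitePi ρ), Tendsto
      (fun n => ∑ j ∈ Finset.range n, ω j) atTop (nhds (∑' k, ω k)) := by
    filter_upwards [hs] with ω hω using hω.hasSum.tendsto_sum_nat
  refine ⟨aemeasurable_of_tendsto_metrizable_ae atTop (fun n => Measurable.aemeasurable
    (by fun_prop)) hlim, fun k ξ => ?_⟩
  have hT : Tendsto (fun n => ∫ ω, Complex.exp (((-2 * Real.pi * ξ *
      (∑ j ∈ Finset.range n, ω j) : ℝ) : ℂ) * Complex.I) ∂(Measure.infinitePi ρ)) atTop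
      (nhds (∫ ω, Complex.exp (((-2 * Real.pi * ξ * (∑' k, ω k) : ℝ) : ℂ) * Complex.I)
      ∂(Measure.infinitePi ρ))) := by
    apply tendsto_integral_of_dominated_convergence (fun _ => (1 : ℝ))
    · intro n
      exact Measurable.aestronglyMeasurable (by fun_prop)
    · exact integrable_const _
    · intro n
      exact ae_of_all _ fun ω => (Complex.norm_exp_ofReal_mul_I _).le
    · filter_upwards [hlim] with ω hω
      have hc : Continuous fun t : ℝ =>
        Complex.exp (((-2 * Real.pi * ξ * t : ℝ) : ℂ) * Complex.I) := by fun_prop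
      exact (hc.tendsto _).comp hω
  refine le_of_tendsto hT.norm ?_
  filter_upwards [eventually_gt_atTop k] with n hn
  have hm : Measurable fun t : ℝ =>
    Complex.exp (((-2 * Real.pi * ξ * t : ℝ) : ℂ) * Complex.I) := by fun_prop
  have hind := (ProbabilityTheory.iIndepFun_infinitePi (P := ρ)
    (X := fun _ t => Complex.exp (((-2 * Real.pi * ξ * t : ℝ) : ℂ) * Complex.I))
    (fun _ => hm)).precomp (g := fun i : Fin n => (i : ℕ)) Fin.val_injective
  have h1 := hind.integral_fun_prod_eq_prod_integral
    (fun i => (hm.comp (measurable_pi_apply (i : ℕ))).aestronglyMeasurable)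
  have e1 : ∀ ω : ℕ → ℝ, Complex.exp (((-2 * Real.pi * ξ *
      (∑ j ∈ Finset.range n, ω j) : ℝ) : ℂ) * Complex.I) =
      ∏ i : Fin n, Complex.exp (((-2 * Real.pi * ξ * ω i : ℝ) : ℂ) * Complex.I) := by
    intro ω
    rw [← Complex.exp_sum, Finset.sum_range, ← Finset.sum_mul, Finset.mul_sum]
    push_cast
    rfl
  have e2 : ∀ j : ℕ, ∫ ω, Complex.exp (((-2 * Real.pi * ξ * ω j : ℝ) : ℂ) * Complex.I)
      ∂(Measure.infinitePi ρ) = fourierT (ρ j) ξ := by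
    intro j
    unfold fourierT
    rw [← Measure.infinitePi_map_eval ρ j, integral_map (measurable_pi_apply j).aemeasurable
      hm.aestronglyMeasurable]
  simp_rw [e1]
  have h2 : ∫ ω, ∏ i : Fin n, Complex.exp (((-2 * Real.pi * ξ * ω i : ℝ) : ℂ) * Complex.I)
      ∂(Measure.infinitePi ρ) = ∏ i : Fin n, fourierT (ρ i) ξ := by
    refine h1.trans ?_
    exact Finset.prod_congr rfl fun i _ => e2 i
  rw [h2, norm_prod]
  have hle1 : ∀ j, ‖fourierT (ρ j) ξ‖ ≤ 1 := by
    intro j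
    refine (norm_integral_le_of_norm_le_const (C := 1)
      (ae_of_all _ fun x => (Complex.norm_exp_ofReal_mul_I _).le)).trans ?_
    simp
  rw [← Finset.mul_prod_erase Finset.univ _ (Finset.mem_univ (⟨k, hn⟩ : Fin n))]
  exact mul_le_of_le_one_right (norm_nonneg _)
    (Finset.prod_le_one (fun _ _ => norm_nonneg _) fun i _ => hle1 i)

theorem stmt12 :
    ∃ ν : Measure ℝ, ν ≠ 0 ∧ IsFiniteMeasure ν ∧ ν {x : ℝ | Liouville x}ᶜ = 0 ∧
      ∃ C > (0 : ℝ), ∃ M > Real.exp 1,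
        ∀ ξ : ℝ, M ≤ |ξ| →
          ‖fourierT ν ξ‖ ≤ C * |Real.cos (2 * Real.pi * ξ)| / Real.log |ξ| := by
  obtain ⟨D, P, ρ, hD0, hDs, hD2, hDP, hprob, hae, hF⟩ := exists_seq
  set μ := Measure.infinitePi ρ with hμ
  have hall : ∀ᵐ ω ∂μ, Summable ω ∧ ∀ m : ℤ, Liouville (∑' k, ω k + m) := by
    have : ∀ᵐ ω ∂μ, ∀ k, 0 < ω k ∧ ω k ≤ 1 / (4 * (D k : ℝ) ^ k) ∧
      ∃ (q : ℕ) (a : ℤ), 1 ≤ q ∧ q ≤ P k ∧ (q : ℝ) * ω k = a := by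
      rw [ae_all_iff]
      intro k
      exact (measurePreserving_eval_infinitePi ρ k).quasiMeasurePreserving.ae (hae k)
    filter_upwards [this] with ω hω using liouville_of_seq D P hD0 hDs hD2 hDP ω hω
  obtain ⟨hmeas, hbound⟩ := prod_bound ρ (hall.mono fun ω h => h.1)
  have hm : ∀ c : ℝ, AEMeasurable (fun ω : ℕ → ℝ => ∑' k, ω k + c) μ :=
    fun c => hmeas.add_const c
  have hpr : ∀ c : ℝ, IsProbabilityMeasure (μ.map (fun ω : ℕ → ℝ => ∑' k, ω k + c)) :=
    fun c => Measure.isProbabilityMeasure_map (hm c)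
  have := hpr 1
  have := hpr (-1)
  have hL : ∀ m : ℤ, (μ.map (fun ω : ℕ → ℝ => ∑' k, ω k + (m : ℝ))) {x : ℝ | Liouville x}ᶜ = 0 := by
    intro m
    rw [Measure.map_apply_of_aemeasurable (hm m) IsGδ.setOfPred_liouville.measurableSet.compl]
    have : ∀ᵐ ω ∂μ, Liouville (∑' k, ω k + (m : ℝ)) := hall.mono fun ω h => h.2 m
    exact this
  have hFm : ∀ c ξ : ℝ, fourierT (μ.map (fun ω : ℕ → ℝ => ∑' k, ω k + c)) ξ =
      Complex.exp (((-2 * Real.pi * ξ * c : ℝ) : ℂ) * Complex.I) *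
      ∫ ω, Complex.exp (((-2 * Real.pi * ξ * (∑' k, ω k) : ℝ) : ℂ) * Complex.I) ∂μ := by
    intro c ξ
    unfold fourierT
    rw [integral_map (hm c) (Measurable.aestronglyMeasurable (by fun_prop)), ← integral_const_mul]
    congr 1
    funext ω
    rw [← Complex.exp_add]
    congr 1
    push_cast
    ring
  refine ⟨μ.map (fun ω : ℕ → ℝ => ∑' k, ω k + 1) + μ.map (fun ω : ℕ → ℝ => ∑' k, ω k + (-1)),
    ?_, inferInstance, ?_, 4, by norm_num, 16, ?_, ?_⟩
  · intro h0
    have h1 := congrArg (fun m : Measure ℝ => m univ) h0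
    simp at h1
  · have h1 := hL 1
    have h2 := hL (-1)
    push_cast at h1 h2
    rw [Measure.add_apply, h1, h2, add_zero]
  · linarith [Real.exp_one_lt_d9]
  · intro ξ hξ
    set I := ∫ ω, Complex.exp (((-2 * Real.pi * ξ * (∑' k, ω k) : ℝ) : ℂ) * Complex.I) ∂μ with hI
    have e : fourierT (μ.map (fun ω : ℕ → ℝ => ∑' k, ω k + 1) +
        μ.map (fun ω : ℕ → ℝ => ∑' k, ω k + (-1))) ξ
        = ((2 * Real.cos (2 * Real.pi * ξ) : ℝ) : ℂ) * I := by
      have hint : ∀ (m : Measure ℝ) [IsProbabilityMeasure m], Integrable (fun x : ℝ =>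
          Complex.exp (((-2 * Real.pi * ξ * x : ℝ) : ℂ) * Complex.I)) m := by
        intro m _
        refine Integrable.of_bound (Measurable.aestronglyMeasurable (by fun_prop)) 1
          (ae_of_all _ fun x => (Complex.norm_exp_ofReal_mul_I _).le)
      have h1 := hFm 1 ξ
      have h2 := hFm (-1) ξ
      unfold fourierT at h1 h2 ⊢
      rw [integral_add_measure (hint _) (hint _), h1, h2, ← add_mul]
      congr 1
      push_cast
      rw [Complex.two_cos]
      rw [add_comm]
      congr 2 <;> ring
    have hex : ∃ k, |ξ| ≤ (P k : ℝ) ^ (4 * k + 8) := by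
      obtain ⟨n, hn⟩ := pow_unbounded_of_one_lt |ξ| (one_lt_two)
      refine ⟨n, hn.le.trans ?_⟩
      have h2 : (2 : ℝ) ≤ P n := by exact_mod_cast (hD2 n).trans (hDP n)
      calc (2 : ℝ) ^ n ≤ 2 ^ (4 * n + 8) := pow_le_pow_right₀ (by norm_num) (by omega)
        _ ≤ _ := by gcongr
    have hIb : ‖I‖ ≤ 2 / Real.log |ξ| := by
      classical
      have hk := Nat.find_spec hex
      have hmin := fun j => Nat.find_min hex (m := j)
      set k := Nat.find hex
      refine (hbound k ξ).trans (hF k ξ ?_ hk)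
      rcases Nat.eq_zero_or_pos k with h0 | h0
      · rw [h0]; simpa using hξ
      · obtain ⟨j, hj⟩ : ∃ j, k = j + 1 := ⟨k - 1, by omega⟩
        have h1 := hmin j (by omega)
        rw [not_le] at h1
        refine le_trans ?_ h1.le
        rw [hj]
        have h2 : 2 ≤ P j := (hD2 j).trans (hDP j)
        have h3 : 16 * D (j + 1) ^ (2 * (j + 1)) ≤ P j ^ (4 * j + 8) := by
          calc 16 * D (j + 1) ^ (2 * (j + 1)) ≤ P j ^ 4 * (P j * P j) ^ (2 * (j + 1)) := by
                rw [hDs]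
                have : 2 ^ 4 ≤ P j ^ 4 := Nat.pow_le_pow_left h2 4
                have := hDP j
                gcongr
                omega
            _ = P j ^ (4 * j + 8) := by rw [← pow_two, ← pow_mul, ← pow_add]; congr 1; ring
        exact_mod_cast h3
    rw [e, norm_mul, Complex.norm_real, Real.norm_eq_abs, abs_mul, abs_two]
    calc 2 * |Real.cos (2 * Real.pi * ξ)| * ‖I‖
        ≤ 2 * |Real.cos (2 * Real.pi * ξ)| * (2 / Real.log |ξ|) := by gcongr
      _ = _ := by ring
end

section
/- Let a > 0 and let 𝕃_a = {x + m/a : x ∈ 𝕃, m ∈ ℤ}. Let μ be a nonzero finite Borel measure on ℝ with μ(ℝ \ 𝕃_a) = 0. Let g : ℝ → ℝ be even and a-periodic with g(0) > 0, and suppose there is a sequence (a_k)_{k≥0} of nonnegative reals such that for every ξ ∈ ℝ the partial sums S_N(ξ) = Σ_{k=0}^{N} a_k·cos(2πkξ/a) converge to g(ξ) as N → ∞. Then there exists a nonzero finite Borel measure ν on ℝ with ν(ℝ \ 𝕃_a) = 0 such that ν̂(ξ) = g(ξ)·μ̂(ξ) for all ξ ∈ ℝ. -/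
open MeasureTheory Filter Set

/-- `𝕃_a = 𝕃 + (1/a)ℤ`, the set of translates of Liouville numbers by `m/a`, `m ∈ ℤ`. -/
def LiouvilleShifted (a : ℝ) : Set ℝ :=
  {y : ℝ | ∃ x : ℝ, Liouville x ∧ ∃ m : ℤ, y = x + (m : ℝ) / a}

lemma fourierT_integrable (μ : Measure ℝ) [IsFiniteMeasure μ] (ξ : ℝ) :
    Integrable (fun x : ℝ => Complex.exp (((-2 * Real.pi * ξ * x : ℝ) : ℂ) * Complex.I)) μ := by
  refine Integrable.of_bound (C := 1) ?_ ?_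
  · exact Continuous.aestronglyMeasurable (by fun_prop)
  · exact ae_of_all _ fun x => (Complex.norm_exp_ofReal_mul_I _).le

lemma fourierT_shift (μ : Measure ℝ) (t ξ : ℝ) :
    fourierT (μ.map (MeasurableEquiv.addRight t)) ξ
      = Complex.exp (((-2 * Real.pi * ξ * t : ℝ) : ℂ) * Complex.I) * fourierT μ ξ := by
  unfold fourierT
  rw [integral_map_equiv, ← integral_const_mul]
  congr 1
  ext x
  rw [← Complex.exp_add]
  congr 1
  simp only [MeasurableEquiv.coe_addRight]
  push_cast
  ring

lemma shift_null (μ : Measure ℝ) (a : ℝ) (hμL : μ (LiouvilleShifted a)ᶜ = 0) (m : ℤ) :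
    μ.map (MeasurableEquiv.addRight ((m : ℝ) / a)) (LiouvilleShifted a)ᶜ = 0 := by
  rw [MeasurableEquiv.map_apply]
  refine measure_mono_null ?_ hμL
  rintro x hx ⟨y, hy, n, rfl⟩
  refine hx ⟨y, hy, n + m, ?_⟩
  simp only [MeasurableEquiv.coe_addRight]
  push_cast
  ring

/-- The `k`-th piece of the measure. -/
noncomputable def pieceM (a : ℝ) (μ : Measure ℝ) (c : ℕ → ℝ) (k : ℕ) : Measure ℝ :=
  ENNReal.ofReal (c k / 2) • (μ.map (MeasurableEquiv.addRight (((k : ℤ) : ℝ) / a))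
    + μ.map (MeasurableEquiv.addRight (((-(k : ℤ) : ℤ) : ℝ) / a)))

lemma pieceM_univ (a : ℝ) (μ : Measure ℝ) (c : ℕ → ℝ) (hc : ∀ k, 0 ≤ c k) (k : ℕ) :
    pieceM a μ c k univ = ENNReal.ofReal (c k) * μ univ := by
  simp only [pieceM, Measure.smul_apply, Measure.add_apply, MeasurableEquiv.map_apply,
    preimage_univ, smul_eq_mul]
  rw [mul_add, ← add_mul, ← ENNReal.ofReal_add (by linarith [hc k]) (by linarith [hc k])]
  simp

lemma pieceM_fourier (a : ℝ) (μ : Measure ℝ) [IsFiniteMeasure μ] (c : ℕ → ℝ)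
    (hc : ∀ k, 0 ≤ c k) (k : ℕ) (ξ : ℝ) :
    fourierT (pieceM a μ c k) ξ
      = ((c k * Real.cos (2 * Real.pi * k * ξ / a) : ℝ) : ℂ) * fourierT μ ξ := by
  have h : fourierT (pieceM a μ c k) ξ = ((c k / 2 : ℝ) : ℂ) *
      (fourierT (μ.map (MeasurableEquiv.addRight (((k : ℤ) : ℝ) / a))) ξ
      + fourierT (μ.map (MeasurableEquiv.addRight (((-(k : ℤ) : ℤ) : ℝ) / a))) ξ) := by
    unfold fourierT pieceM
    rw [integral_smul_measure, integral_add_measure (fourierT_integrable _ _)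
      (fourierT_integrable _ _), ENNReal.toReal_ofReal (by linarith [hc k]), Complex.real_smul]
  rw [h, fourierT_shift, fourierT_shift]
  push_cast
  rw [Complex.cos]
  have e1 : -2 * (Real.pi : ℂ) * ξ * (k / a) * Complex.I
    = -(2 * (Real.pi : ℂ) * k * ξ / a) * Complex.I := by ring
  have e2 : -2 * (Real.pi : ℂ) * ξ * (-k / a) * Complex.I
    = (2 * (Real.pi : ℂ) * k * ξ / a) * Complex.I := by ring
  rw [e1, e2]
  ring

theorem stmt15 (a : ℝ) (ha : 0 < a)
    (μ : Measure ℝ) [IsFiniteMeasure μ] (hμ_ne : μ ≠ 0)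
    (hμL : μ (LiouvilleShifted a)ᶜ = 0)
    (g : ℝ → ℝ)
    (hg_even : ∀ x, g (-x) = g x)
    (hg_per : ∀ x, g (x + a) = g x)
    (hg0 : 0 < g 0)
    (c : ℕ → ℝ) (hc_nonneg : ∀ k, 0 ≤ c k)
    (hc_conv : ∀ ξ : ℝ, Tendsto
      (fun N : ℕ => ∑ k ∈ Finset.range (N + 1), c k * Real.cos (2 * Real.pi * k * ξ / a))
      atTop (nhds (g ξ))) :
    ∃ ν : Measure ℝ, ν ≠ 0 ∧ IsFiniteMeasure ν ∧ ν (LiouvilleShifted a)ᶜ = 0 ∧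
      ∀ ξ : ℝ, fourierT ν ξ = (g ξ : ℂ) * fourierT μ ξ := by
  have hsum : Summable c := by
    have h0 := hc_conv 0
    simp only [mul_zero, zero_div, Real.cos_zero, mul_one] at h0
    exact ((hasSum_iff_tendsto_nat_of_nonneg hc_nonneg _).2
      ((tendsto_add_atTop_iff_nat (f := fun N => ∑ k ∈ Finset.range N, c k) 1).1 h0)).summable
  have hfin : IsFiniteMeasure (Measure.sum (pieceM a μ c)) := by
    constructor
    rw [Measure.sum_apply _ MeasurableSet.univ]
    simp only [pieceM_univ a μ c hc_nonneg]
    rw [ENNReal.tsum_mul_right, ← ENNReal.ofReal_tsum_of_nonneg hc_nonneg hsum]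
    exact ENNReal.mul_lt_top ENNReal.ofReal_lt_top (measure_lt_top _ _)
  have hF : ∀ ξ : ℝ, fourierT (Measure.sum (pieceM a μ c)) ξ = (g ξ : ℂ) * fourierT μ ξ := by
    intro ξ
    have h1 : HasSum (fun k => fourierT (pieceM a μ c k) ξ)
        (fourierT (Measure.sum (pieceM a μ c)) ξ) :=
      hasSum_integral_measure (fourierT_integrable _ ξ)
    simp only [pieceM_fourier a μ c hc_nonneg] at h1
    have h2 := (tendsto_add_atTop_iff_nat 1).2 h1.tendsto_sum_nat
    have h3 := ((Complex.continuous_ofReal.tendsto _).comp (hc_conv ξ)).mul_const (fourierT μ ξ)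
    refine tendsto_nhds_unique h2 (h3.congr fun N => ?_)
    simp only [Function.comp_apply]
    rw [Complex.ofReal_sum, Finset.sum_mul]
  refine ⟨Measure.sum (pieceM a μ c), ?_, hfin, ?_, hF⟩
  · intro h0
    have h := hF 0
    rw [h0] at h
    have h4 : fourierT μ 0 = ((μ.real univ : ℝ) : ℂ) := by simp [fourierT]
    have h5 : fourierT (0 : Measure ℝ) 0 = 0 := by simp [fourierT]
    rw [h4, h5] at h
    have h6 : μ.real univ ≠ 0 := by
      simpa [Measure.real, ENNReal.toReal_eq_zero_iff] using hμ_ne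
    exact mul_ne_zero (Complex.ofReal_ne_zero.2 hg0.ne') (Complex.ofReal_ne_zero.2 h6) h.symm
  · rw [Measure.sum_apply_of_countable, ENNReal.tsum_eq_zero]
    intro k
    simp only [pieceM, Measure.smul_apply, Measure.add_apply, shift_null μ a hμL, add_zero,
      smul_zero]
end

section
/- Let a > 0 and let f : [0,∞) → (0,∞), and for ξ > 1 define τ(ξ) = −log f(ξ)/log ξ. Suppose that liminf_{k→∞, k ∈ ℕ} τ(ak) > 0 and that τ is uniformly continuous on (1,∞). Then there is no Borel probability measure μ on ℝ with μ(ℝ \ 𝕃) = 0 for which there exist C > 0, M > 0 with |μ̂(ξ)| ≤ C·f(|ξ|) for all |ξ| ≥ M. -/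
open MeasureTheory Filter Set

lemma aux_fourierT_le (μ : Measure ℝ) [IsProbabilityMeasure μ] (ξ : ℝ) : ‖fourierT μ ξ‖ ≤ 1 := by
  unfold fourierT
  refine (norm_integral_le_integral_norm _).trans ?_
  simp only [Complex.norm_exp_ofReal_mul_I]
  simp

/-- Polynomial decay along the lattice. -/
lemma aux_decay (a : ℝ) (ha : 0 < a)
    (f : ℝ → ℝ) (hf_pos : ∀ ξ, 0 ≤ ξ → 0 < f ξ)
    (τ : ℝ → ℝ)
    (hτ : ∀ ξ, 1 < ξ → τ ξ = -Real.log (f ξ) / Real.log ξ)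
    (hliminf : 0 < liminf (fun k : ℕ => ((τ (a * k) : ℝ) : EReal)) atTop)
    (μ : Measure ℝ) (C : ℝ) (hC : 0 < C) (M : ℝ)
    (h : ∀ ξ : ℝ, M ≤ |ξ| → ‖fourierT μ ξ‖ ≤ C * f |ξ|) :
    ∃ ε : ℝ, 0 < ε ∧ ε ≤ 1 ∧ ∃ C₁ : ℝ, 0 < C₁ ∧ ∃ K : ℕ, ∀ k : ℤ, K ≤ k.natAbs →
      ‖fourierT μ (a * k)‖ ≤ C₁ * (k.natAbs : ℝ) ^ (-ε) := by
  obtain ⟨e, he0, he⟩ := EReal.lt_iff_exists_real_btwn.1 hliminf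
  have he0' : 0 < e := by exact_mod_cast he0
  have hev := eventually_lt_of_lt_liminf he
  have hlarge : Tendsto (fun k : ℕ => a * (k : ℝ)) atTop atTop :=
    tendsto_natCast_atTop_atTop.const_mul_atTop ha
  have hev2 := (hev.and ((hlarge.eventually_ge_atTop M).and
    ((hlarge.eventually_gt_atTop 1).and (eventually_ge_atTop 1))))
  obtain ⟨K, hK⟩ := eventually_atTop.1 hev2
  refine ⟨min e 1, lt_min he0' one_pos, min_le_right _ _, C * a ^ (-(min e 1)),
    mul_pos hC (Real.rpow_pos_of_pos ha _), K, fun k hk => ?_⟩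
  obtain ⟨h1, h2, h3, h4⟩ := hK _ hk
  have h1' : e < τ (a * (k.natAbs : ℝ)) := by exact_mod_cast h1
  have habs : |a * (k : ℝ)| = a * (k.natAbs : ℝ) := by
    rw [abs_mul, abs_of_pos ha, Nat.cast_natAbs, Int.cast_abs]
  have h5 := h (a * k) (by rw [habs]; exact h2)
  rw [habs] at h5
  refine h5.trans ?_
  rw [mul_assoc]
  refine mul_le_mul_of_nonneg_left ?_ hC.le
  rw [← Real.mul_rpow ha.le (Nat.cast_nonneg _)]
  set ξ := a * (k.natAbs : ℝ) with hξ
  have hlog : 0 < Real.log ξ := Real.log_pos h3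
  have hfp := hf_pos ξ (by linarith)
  rw [← Real.log_le_log_iff hfp (Real.rpow_pos_of_pos (by linarith) _),
    Real.log_rpow (by linarith)]
  rw [hτ ξ h3, lt_div_iff₀ hlog] at h1'
  have : min e 1 * Real.log ξ ≤ e * Real.log ξ :=
    mul_le_mul_of_nonneg_right (min_le_left _ _) hlog.le
  linarith

/-- The trigonometric sum. -/
noncomputable def auxD (a x : ℝ) (N : ℕ) (y : ℝ) : ℂ :=
  ∑ j ∈ Finset.range N, Complex.exp (((-2 * Real.pi * (a * j) * (y - x) : ℝ) : ℂ) * Complex.I)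

lemma auxD_cont (a x : ℝ) (N : ℕ) : Continuous (auxD a x N) := by
  unfold auxD
  fun_prop

lemma auxD_sq (a x : ℝ) (N : ℕ) (y : ℝ) :
    ((‖auxD a x N y‖ ^ 2 : ℝ) : ℂ) = ∑ j ∈ Finset.range N, ∑ l ∈ Finset.range N,
      Complex.exp (((2 * Real.pi * (a * ((j:ℤ) - (l:ℤ) : ℤ)) * x : ℝ) : ℂ) * Complex.I) *
      Complex.exp (((-2 * Real.pi * (a * ((j:ℤ) - (l:ℤ) : ℤ)) * y : ℝ) : ℂ) * Complex.I) := by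
  push_cast
  rw [← Complex.mul_conj']
  unfold auxD
  rw [map_sum, Finset.sum_mul_sum]
  refine Finset.sum_congr rfl fun j _ => Finset.sum_congr rfl fun l _ => ?_
  rw [← Complex.exp_conj, ← Complex.exp_add, ← Complex.exp_add]
  congr 1
  simp only [map_mul, Complex.conj_ofReal, Complex.conj_I]
  push_cast
  ring

lemma auxD_int (a x : ℝ) (N : ℕ) (μ : Measure ℝ) [IsProbabilityMeasure μ] :
    ∫ y, ‖auxD a x N y‖ ^ 2 ∂μ ≤ ∑ j ∈ Finset.range N, ∑ l ∈ Finset.range N,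
      ‖fourierT μ (a * ((j:ℤ) - (l:ℤ) : ℤ))‖ := by
  have hi : ∀ ξ : ℝ, Integrable
      (fun y : ℝ => Complex.exp (((-2 * Real.pi * ξ * y : ℝ) : ℂ) * Complex.I)) μ := by
    intro ξ
    refine Integrable.of_bound (Continuous.aestronglyMeasurable (by fun_prop)) 1 ?_
    filter_upwards with y
    rw [Complex.norm_exp_ofReal_mul_I]
  have h1 : ((∫ y, ‖auxD a x N y‖ ^ 2 ∂μ : ℝ) : ℂ) = ∑ j ∈ Finset.range N, ∑ l ∈ Finset.range N,
      Complex.exp (((2 * Real.pi * (a * ((j:ℤ) - (l:ℤ) : ℤ)) * x : ℝ) : ℂ) * Complex.I) *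
      fourierT μ (a * ((j:ℤ) - (l:ℤ) : ℤ)) := by
    rw [← integral_complex_ofReal]
    simp_rw [auxD_sq]
    rw [integral_finsetSum]
    · refine Finset.sum_congr rfl fun j _ => ?_
      rw [integral_finsetSum]
      · refine Finset.sum_congr rfl fun l _ => ?_
        rw [integral_const_mul]
        rfl
      · intro l _
        exact (hi _).const_mul _
    · intro j _
      exact integrable_finsetSum _ fun l _ => (hi _).const_mul _
  have h2 : ∫ y, ‖auxD a x N y‖ ^ 2 ∂μ ≤ ‖((∫ y, ‖auxD a x N y‖ ^ 2 ∂μ : ℝ) : ℂ)‖ := by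
    rw [Complex.norm_real]
    exact le_abs_self _
  refine h2.trans ?_
  rw [h1]
  refine (norm_sum_le _ _).trans (Finset.sum_le_sum fun j _ => ?_)
  refine (norm_sum_le _ _).trans (Finset.sum_le_sum fun l _ => ?_)
  rw [norm_mul, Complex.norm_exp_ofReal_mul_I, one_mul]

lemma auxD_lower (a : ℝ) (ha : 0 < a) (x : ℝ) (N : ℕ) (y : ℝ)
    (h : 6 * a * N * |y - x| ≤ 1) : (N : ℝ) / 2 ≤ ‖auxD a x N y‖ := by
  refine le_trans ?_ (Complex.re_le_norm _)
  unfold auxD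
  rw [Complex.re_sum]
  have : (N : ℝ) / 2 = ∑ j ∈ Finset.range N, (1 / 2 : ℝ) := by simp; ring
  rw [this]
  refine Finset.sum_le_sum fun j hj => ?_
  rw [Complex.exp_ofReal_mul_I_re, ← Real.cos_pi_div_three, ← Real.cos_abs (-2 * _ * _ * _)]
  have hj' : (j : ℝ) ≤ N := by exact_mod_cast (Finset.mem_range.1 hj).le
  have e : |-2 * Real.pi * (a * j) * (y - x)| = 2 * Real.pi * (a * j * |y - x|) := by
    rw [abs_mul, abs_mul, abs_mul, abs_of_pos Real.pi_pos, abs_of_nonneg (by positivity : 0 ≤ a * j)]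
    norm_num
    ring
  rw [e]
  have h6 : a * j * |y - x| ≤ a * N * |y - x| := by gcongr
  refine Real.cos_le_cos_of_nonneg_of_le_pi (by positivity) (by linarith [Real.pi_pos]) ?_
  have h7 : a * j * |y - x| ≤ 1 / 6 := by linarith
  nlinarith [Real.pi_pos]

lemma aux_count (N M j : ℕ) :
    ((Finset.range N).filter (fun l : ℕ => ((j:ℤ) - (l:ℤ)).natAbs < M)).card ≤ 2 * M := by
  have : (Finset.range N).filter (fun l : ℕ => ((j:ℤ) - (l:ℤ)).natAbs < M) ⊆
      Finset.Ico (j + 1 - M) (j + M) := by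
    intro l hl
    simp only [Finset.mem_filter, Finset.mem_range, Finset.mem_Ico] at *
    omega
  refine (Finset.card_le_card this).trans ?_
  rw [Nat.card_Ico]
  omega

lemma aux_frostman (a : ℝ) (ha : 0 < a) (μ : Measure ℝ) [IsProbabilityMeasure μ]
    (ε : ℝ) (hε : 0 < ε) (hε1 : ε ≤ 1) (C₁ : ℝ) (hC₁ : 0 < C₁) (K : ℕ)
    (h : ∀ k : ℤ, K ≤ k.natAbs → ‖fourierT μ (a * k)‖ ≤ C₁ * (k.natAbs : ℝ) ^ (-ε))
    (M : ℕ) (hM1 : 1 ≤ M) (hMK : K ≤ M) (x : ℝ) :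
    μ.real {y | 6 * a * (M ^ 2 : ℕ) * |y - x| ≤ 1} ≤ 4 * (2 + C₁) * (M : ℝ) ^ (-ε) := by
  set N := M ^ 2 with hN
  have hMpos : (0 : ℝ) < M := by exact_mod_cast hM1
  set D := C₁ * (M : ℝ) ^ (-ε) with hD
  have hDpos : 0 < D := mul_pos hC₁ (Real.rpow_pos_of_pos hMpos _)
  have hsum : ∑ j ∈ Finset.range N, ∑ l ∈ Finset.range N,
      ‖fourierT μ (a * ((j:ℤ) - (l:ℤ) : ℤ))‖ ≤ N * (2 * M + N * D) := by
    have : ∀ j ∈ Finset.range N, ∑ l ∈ Finset.range N,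
        ‖fourierT μ (a * ((j:ℤ) - (l:ℤ) : ℤ))‖ ≤ 2 * M + N * D := by
      intro j _
      have h1 : ∀ l ∈ Finset.range N, ‖fourierT μ (a * ((j:ℤ) - (l:ℤ) : ℤ))‖ ≤
          (if ((j:ℤ) - (l:ℤ)).natAbs < M then (1:ℝ) else 0) + D := by
        intro l _
        split_ifs with hc
        · linarith [aux_fourierT_le μ (a * ((j:ℤ) - (l:ℤ) : ℤ))]
        · push Not at hc
          refine (h _ (hMK.trans hc)).trans ?_
          rw [zero_add]
          refine mul_le_mul_of_nonneg_left ?_ hC₁.le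
          exact Real.rpow_le_rpow_of_nonpos hMpos (by exact_mod_cast hc) (by linarith)
      refine (Finset.sum_le_sum h1).trans ?_
      rw [Finset.sum_add_distrib, Finset.sum_boole, Finset.sum_const, Finset.card_range,
        nsmul_eq_mul]
      gcongr
      exact_mod_cast aux_count N M j
    refine (Finset.sum_le_sum this).trans ?_
    rw [Finset.sum_const, Finset.card_range, nsmul_eq_mul]
  have hint : Integrable (fun y => ‖auxD a x N y‖ ^ 2) μ := by
    refine Integrable.of_bound
      ((auxD_cont a x N).norm.pow 2).aestronglyMeasurable ((N : ℝ) ^ 2) ?_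
    filter_upwards with y
    rw [Real.norm_of_nonneg (by positivity)]
    gcongr
    unfold auxD
    refine (norm_sum_le _ _).trans ?_
    simp only [Complex.norm_exp_ofReal_mul_I]
    simp
  have hmk := mul_meas_ge_le_integral_of_nonneg (μ := μ) (f := fun y => ‖auxD a x N y‖ ^ 2)
    (Eventually.of_forall fun y => by positivity) hint ((N : ℝ) ^ 2 / 4)
  have hsub : {y | 6 * a * (N : ℕ) * |y - x| ≤ 1} ⊆ {y | (N : ℝ) ^ 2 / 4 ≤ ‖auxD a x N y‖ ^ 2} := by
    intro y hy
    have := auxD_lower a ha x N y hy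
    have h0 : (0 : ℝ) ≤ N := Nat.cast_nonneg _
    simp only [mem_setOf_eq]
    nlinarith
  have hmono : μ.real {y | 6 * a * (N : ℕ) * |y - x| ≤ 1} ≤
      μ.real {y | (N : ℝ) ^ 2 / 4 ≤ ‖auxD a x N y‖ ^ 2} := measureReal_mono hsub
  have hNpos : (0 : ℝ) < N := by rw [hN]; push_cast; positivity
  have hNM : (N : ℝ) = M ^ 2 := by rw [hN]; push_cast; rfl
  have hfin : (N : ℝ) ^ 2 / 4 * μ.real {y | 6 * a * (N : ℕ) * |y - x| ≤ 1} ≤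
      N * (2 * M + N * D) :=
    (mul_le_mul_of_nonneg_left hmono (by positivity)).trans
      (hmk.trans ((auxD_int a x N μ).trans hsum))
  have hMr : (M : ℝ) ≤ N * (M : ℝ) ^ (-ε) := by
    have h1 : (M : ℝ) ^ (-(1:ℝ)) ≤ (M : ℝ) ^ (-ε) :=
      Real.rpow_le_rpow_of_exponent_le (by exact_mod_cast hM1) (by linarith)
    rw [Real.rpow_neg_one] at h1
    calc (M : ℝ) = N * (M : ℝ)⁻¹ := by rw [hNM]; field_simp
      _ ≤ _ := by gcongr
  have hfin2 : (N : ℝ) ^ 2 / 4 * μ.real {y | 6 * a * (N : ℕ) * |y - x| ≤ 1} ≤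
      (N : ℝ) ^ 2 / 4 * (4 * (2 + C₁) * (M : ℝ) ^ (-ε)) := by
    refine hfin.trans ?_
    calc (N : ℝ) * (2 * M + N * D) ≤ N * (2 * (N * (M : ℝ) ^ (-ε)) + N * D) := by gcongr
      _ = _ := by rw [hD]; ring
  exact le_of_mul_le_mul_left hfin2 (by positivity)

lemma aux_liouville (a : ℝ) (ha : 0 < a) (μ : Measure ℝ) [IsProbabilityMeasure μ]
    (ε : ℝ) (hε : 0 < ε) (C₂ : ℝ) (hC₂ : 0 < C₂) (K : ℕ)
    (h : ∀ M : ℕ, 1 ≤ M → K ≤ M → ∀ x : ℝ,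
      μ.real {y | 6 * a * (M ^ 2 : ℕ) * |y - x| ≤ 1} ≤ C₂ * (M : ℝ) ^ (-ε)) :
    μ {x : ℝ | Liouville x} = 0 := by
  obtain ⟨m, hm⟩ := exists_nat_ge (3 / ε)
  have hm3 : 3 ≤ m * ε := by rwa [div_le_iff₀ hε] at hm
  have hmpos : 1 ≤ m := by
    rcases Nat.eq_zero_or_pos m with h0 | h0
    · subst h0; norm_num at hm3
    · exact h0
  obtain ⟨q0, hq0⟩ := exists_nat_ge (6 * a)
  -- the exceptional event
  let p : ℕ → ℕ → ℝ → Prop := fun R q x =>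
    q0 + K + 1 ≤ q ∧ ∃ b ∈ Finset.Icc (-((R * q : ℕ) : ℤ)) ((R * q : ℕ) : ℤ),
      |x - b / q| < 1 / (q : ℝ) ^ (2 * m + 1)
  have hp : ∀ R q, μ {x | p R q x} ≤ ENNReal.ofReal ((2 * R + 1) * C₂ * (1 / (q : ℝ) ^ 2)) := by
    intro R q
    by_cases hq : q0 + K + 1 ≤ q
    swap
    · have : {x | p R q x} = ∅ := by
        exact eq_empty_of_forall_notMem fun x hx => hq hx.1
      rw [this, measure_empty]; exact bot_le
    have hq1 : (1 : ℝ) ≤ q := by exact_mod_cast (by omega : 1 ≤ q)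
    have hqa : 6 * a ≤ q := hq0.trans (by exact_mod_cast (by omega : q0 ≤ q))
    have hsub : {x | p R q x} ⊆ ⋃ b ∈ Finset.Icc (-((R * q : ℕ) : ℤ)) ((R * q : ℕ) : ℤ),
        {y | 6 * a * ((q ^ m) ^ 2 : ℕ) * |y - (b / q : ℝ)| ≤ 1} := by
      rintro x ⟨_, b, hb, hx⟩
      simp only [mem_iUnion]
      refine ⟨b, hb, ?_⟩
      simp only [mem_setOf_eq]
      push_cast
      calc 6 * a * ((q : ℝ) ^ m) ^ 2 * |x - b / q|
          ≤ q * ((q : ℝ) ^ m) ^ 2 * (1 / (q : ℝ) ^ (2 * m + 1)) := by gcongr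
        _ = 1 := by
          have : (q : ℝ) ≠ 0 := by positivity
          field_simp
          ring
    have hball : ∀ b : ℤ, μ {y | 6 * a * ((q ^ m) ^ 2 : ℕ) * |y - (b / q : ℝ)| ≤ 1} ≤
        ENNReal.ofReal (C₂ * (1 / (q : ℝ) ^ 3)) := by
      intro b
      have hK : K ≤ q ^ m := (by omega : K ≤ q).trans (Nat.le_self_pow (by omega) q)
      have h1 := h (q ^ m) (Nat.one_le_pow _ _ (by omega)) hK (b / q)
      rw [← ofReal_measureReal]
      refine ENNReal.ofReal_le_ofReal (h1.trans ?_)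
      refine mul_le_mul_of_nonneg_left ?_ hC₂.le
      push_cast
      rw [← Real.rpow_natCast, ← Real.rpow_mul (by positivity), one_div, ← Real.rpow_natCast,
        ← Real.rpow_neg (by positivity)]
      refine Real.rpow_le_rpow_of_exponent_le hq1 ?_
      push_cast
      linarith
    refine (measure_mono hsub).trans ((measure_biUnion_finset_le _ _).trans ?_)
    refine (Finset.sum_le_sum fun b _ => hball b).trans ?_
    rw [Finset.sum_const, Int.card_Icc, nsmul_eq_mul, ← ENNReal.ofReal_natCast,
      ← ENNReal.ofReal_mul (by positivity)]
    refine ENNReal.ofReal_le_ofReal ?_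
    have hcard : (((((R * q : ℕ) : ℤ) + 1 - -((R * q : ℕ) : ℤ)).toNat : ℕ) : ℝ) ≤ (2 * R + 1) * q := by
      have : ((((R * q : ℕ) : ℤ) + 1 - -((R * q : ℕ) : ℤ)).toNat : ℕ) = 2 * (R * q) + 1 := by omega
      rw [this]; push_cast; nlinarith
    calc _ ≤ ((2 * R + 1) * q) * (C₂ * (1 / (q : ℝ) ^ 3)) := by gcongr
      _ = _ := by
        have : (q : ℝ) ≠ 0 := by positivity
        field_simp
  have hnull : ∀ R, μ {x | ∃ᶠ q in atTop, p R q x} = 0 := by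
    intro R
    refine measure_setOf_frequently_eq_zero (ne_top_of_le_ne_top ?_ (ENNReal.tsum_le_tsum (hp R)))
    have hs : Summable fun q : ℕ => (2 * R + 1) * C₂ * (1 / (q : ℝ) ^ 2) :=
      (Real.summable_one_div_nat_pow.2 one_lt_two).mul_left _
    rw [← ENNReal.ofReal_tsum_of_nonneg (fun q => by positivity) hs]
    exact ENNReal.ofReal_ne_top
  refine measure_mono_null ?_ (measure_iUnion_null hnull)
  intro x hx
  obtain ⟨R, hR⟩ := exists_nat_ge (|x| + 1)
  refine mem_iUnion.2 ⟨R, ?_⟩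
  have hf := hx.frequently_exists_num (2 * m + 1)
  refine (hf.and_eventually (eventually_ge_atTop (q0 + K + 1))).mono ?_
  rintro q ⟨⟨b, _, hb⟩, hq⟩
  refine ⟨hq, b, ?_, hb⟩
  have hq1 : (1 : ℝ) ≤ q := by exact_mod_cast (by omega : 1 ≤ q)
  have h1 : |x - b / q| < 1 := hb.trans_le (by
    rw [div_le_one (by positivity)]; exact one_le_pow₀ hq1)
  have h2 : |(b : ℝ) / q| ≤ R := by
    have := abs_sub_abs_le_abs_sub ((b : ℝ) / q) x
    rw [abs_sub_comm] at this
    linarith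
  rw [abs_div, Nat.abs_cast, div_le_iff₀ (by positivity)] at h2
  rw [Finset.mem_Icc, ← abs_le]
  exact_mod_cast h2

theorem stmt16 (a : ℝ) (ha : 0 < a)
    (f : ℝ → ℝ) (hf_pos : ∀ ξ, 0 ≤ ξ → 0 < f ξ)
    (τ : ℝ → ℝ)
    (hτ : ∀ ξ, 1 < ξ → τ ξ = -Real.log (f ξ) / Real.log ξ)
    (hliminf : 0 < liminf (fun k : ℕ => ((τ (a * k) : ℝ) : EReal)) atTop)
    (hτ_uc : UniformContinuousOn τ (Ioi 1)) :
    ¬ ∃ μ : Measure ℝ, IsProbabilityMeasure μ ∧ μ {x : ℝ | Liouville x}ᶜ = 0 ∧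
      ∃ C > (0 : ℝ), ∃ M > (0 : ℝ),
        ∀ ξ : ℝ, M ≤ |ξ| → ‖fourierT μ ξ‖ ≤ C * f |ξ| := by
  rintro ⟨μ, hμ, hL, C, hC, M, hM, h⟩
  obtain ⟨ε, hε, hε1, C₁, hC₁, K, hK⟩ := aux_decay a ha f hf_pos τ hτ hliminf μ C hC M h
  have h0 := aux_liouville a ha μ ε hε (4 * (2 + C₁)) (by positivity) K
    (fun m hm1 hmK x => aux_frostman a ha μ ε hε hε1 C₁ hC₁ K hK m hm1 hmK x)
  have h1 : μ univ ≤ 0 := by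
    rw [← union_compl_self {x : ℝ | Liouville x}]
    refine (measure_union_le _ _).trans ?_
    rw [h0, hL, add_zero]
  rw [measure_univ] at h1
  exact absurd h1 (by simp)
end

section
/- For every p > 0 there exist a Borel probability measure μ on ℝ with μ(ℝ \ 𝕃) = 0 and constants C > 0, M > e such that |μ̂(ξ)| ≤ C·(log|ξ|)^(−p) for all ξ ∈ ℝ with |ξ| ≥ M. -/
open MeasureTheory Filter Set

lemma aux_primes (s : ℝ) (hs : 0 < s) (k A : ℕ) (hA : 1 ≤ A) :
    ∃ N : ℕ, 2 ≤ N ∧ (k * Real.log (2 * A * N)) ^ s ≤ ((Nat.primesLE N).card : ℝ) := by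
  have h1 := (isLittleO_log_rpow_rpow_atTop (s + 1) (zero_lt_one)).bound
    (c := 1 / (4 * ((2 * k) ^ s + 1))) (by positivity)
  have h2 := (isLittleO_log_rpow_rpow_atTop 1 (zero_lt_one)).bound
    (c := 1 / 16) (by positivity)
  have h1' := tendsto_natCast_atTop_atTop (R := ℝ) |>.eventually h1
  have h2' := tendsto_natCast_atTop_atTop (R := ℝ) |>.eventually h2
  obtain ⟨N, a1, a2, a3⟩ := (h1'.and (h2'.and (eventually_ge_atTop (max 3 (2 * A))))).exists
  have N3 : 3 ≤ N := le_trans (le_max_left _ _) a3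
  have NA : 2 * A ≤ N := le_trans (le_max_right _ _) a3
  have N3' : (3 : ℝ) ≤ N := by exact_mod_cast N3
  have NA' : (2 : ℝ) * A ≤ N := by exact_mod_cast NA
  have hA' : (1 : ℝ) ≤ A := by exact_mod_cast hA
  have hl : 0 < Real.log N := Real.log_pos (by linarith)
  refine ⟨N, by omega, ?_⟩
  rw [Nat.primesLE_card_eq_primeCounting]
  refine le_trans ?_ (Chebyshev.pi_ge N)
  rw [le_div_iff₀ hl]
  have e1 : Real.log (2 * A * N) ≤ 2 * Real.log N := by
    rw [Real.log_mul (by positivity) (by positivity)]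
    have := Real.log_le_log (by positivity) NA'
    linarith
  have e0 : 0 ≤ Real.log (2 * A * N) := Real.log_nonneg (by nlinarith)
  have e2 : (k * Real.log (2 * A * N)) ^ s ≤ (2 * k) ^ s * (Real.log N) ^ s := by
    rw [← Real.mul_rpow (by positivity) hl.le]
    apply Real.rpow_le_rpow (by positivity) _ hs.le
    have : (0 : ℝ) ≤ k := by positivity
    nlinarith
  have e3 : Real.log (N + 1) ≤ 2 * Real.log N := by
    rw [two_mul, ← Real.log_mul (by positivity) (by positivity)]
    apply Real.log_le_log (by positivity)
    nlinarith
  simp only [Real.rpow_one, Real.norm_eq_abs, Nat.abs_cast] at a1 a2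
  have a1' := (le_abs_self _).trans a1
  have a2' := (le_abs_self _).trans a2
  rw [Real.rpow_add hl, Real.rpow_one] at a1'
  have hB : (0 : ℝ) ≤ (2 * k) ^ s := by positivity
  have e4 : (2 * k) ^ s * ((Real.log N) ^ s * Real.log N) ≤ N / 4 := by
    calc _ ≤ ((2 * (k : ℝ)) ^ s + 1) * (1 / (4 * ((2 * (k : ℝ)) ^ s + 1)) * N) := by
          gcongr; linarith
      _ = _ := by field_simp
  have e5 := mul_le_mul_of_nonneg_right e2 hl.le
  have := Real.log_two_gt_d9
  nlinarith

lemma aux_count_s17 (P : Finset ℕ) (hP : ∀ q ∈ P, q.Prime) (m : ℤ) (hm : m ≠ 0) :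
    (((P.filter (fun q : ℕ => (q : ℤ) ∣ m)).card : ℕ) : ℝ) ≤ Real.log |(m : ℝ)| / Real.log 2 := by
  set S := P.filter (fun q : ℕ => (q : ℤ) ∣ m)
  have h : ∏ q ∈ S, q ∣ m.natAbs := by
    apply Finset.prod_primes_dvd
    · intro q hq; exact (hP q (Finset.mem_filter.1 hq).1).prime
    · intro q hq; exact Int.natCast_dvd.1 (Finset.mem_filter.1 hq).2
  have h2 : 2 ^ S.card ≤ ∏ q ∈ S, q := by
    rw [← Finset.prod_const]
    apply Finset.prod_le_prod' 
    intro q hq; exact (hP q (Finset.mem_filter.1 hq).1).two_le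
  have h3 := h2.trans (Nat.le_of_dvd (Int.natAbs_pos.2 hm) h)
  have h4 : (2 : ℝ) ^ S.card ≤ |(m : ℝ)| := by
    rw [← Int.cast_abs, Int.abs_eq_natAbs]; exact_mod_cast h3
  rw [le_div_iff₀ (Real.log_pos (by norm_num)), ← Real.log_pow]
  exact Real.log_le_log (by positivity) h4

/-- the exponential -/
noncomputable def ee (x : ℝ) : ℂ := Complex.exp (((-2 * Real.pi * x : ℝ) : ℂ) * Complex.I)

lemma ee_norm (x : ℝ) : ‖ee x‖ = 1 := by
  unfold ee; exact Complex.norm_exp_ofReal_mul_I _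

lemma ee_add (x y : ℝ) : ee (x + y) = ee x * ee y := by
  unfold ee; rw [← Complex.exp_add]; congr 1; push_cast; ring

lemma ee_sub_one (x : ℝ) : 4 * |x - round x| ≤ ‖ee x - 1‖ := by
  have h : ‖ee x - 1‖ = 2 * |Real.sin (Real.pi * x)| := by
    unfold ee
    rw [mul_comm, Complex.norm_exp_I_mul_ofReal_sub_one]
    rw [norm_mul, show -2 * Real.pi * x / 2 = -(Real.pi * x) by ring, Real.sin_neg]
    simp
  have h2 : |Real.sin (Real.pi * x)| = |Real.sin (Real.pi * (x - round x))| := by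
    rw [mul_sub, mul_comm Real.pi (round x : ℝ), Real.sin_sub_int_mul_pi, abs_mul]
    simp
  rw [h, h2]
  have h3 := abs_sub_round x
  have h4 : |Real.pi * (x - round x)| = Real.pi * |x - round x| := by
    rw [abs_mul, abs_of_pos Real.pi_pos]
  have h5 := Real.mul_abs_le_abs_sin (x := Real.pi * (x - round x)) (by
    rw [h4]; have := Real.pi_pos; nlinarith)
  rw [h4] at h5
  have : 2 / Real.pi * (Real.pi * |x - round x|) = 2 * |x - round x| := by
    have := Real.pi_pos
    field_simp
  linarith

lemma ee_nat_mul (n : ℕ) (x : ℝ) : ee (n * x) = ee x ^ n := by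
  unfold ee; rw [← Complex.exp_nat_mul]; congr 1; push_cast; ring

lemma aux_geom (q : ℕ) (hq : 0 < q) (t K : ℝ) (hK : 0 < K)
    (h : K < |t - q * round (t / q)|) :
    ‖(1 / q : ℂ) * ∑ a ∈ Finset.Icc 1 q, ee (t * (a / q))‖ ≤ 1 / K := by
  have hq' : (0 : ℝ) < q := by exact_mod_cast hq
  have h1 : ∑ a ∈ Finset.Icc 1 q, ee (t * (a / q)) = ∑ a ∈ Finset.Ico 1 (q+1), ee (t / q) ^ a := by
    apply Finset.sum_congr (by ext; simp)
    intro a _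
    rw [← ee_nat_mul]; congr 1; ring
  have h2 := ee_sub_one (t / q)
  have h3 : |t / q - round (t / q)| = |t - q * round (t / q)| / q := by
    rw [← abs_of_pos hq', ← abs_div, abs_of_pos hq']; congr 1; field_simp
  rw [h3] at h2
  have h4 : 4 * K / q < ‖ee (t / q) - 1‖ := by
    refine lt_of_lt_of_le ?_ h2
    rw [mul_div_assoc]; gcongr
  have h5 : ee (t / q) ≠ 1 := by
    intro h; rw [h] at h4; simp at h4
    have : 0 < 4 * K / q := by positivity
    linarith
  have h6 : 0 < 4 * K / q := by positivity
  rw [h1, geom_sum_Ico h5 (by omega), norm_mul]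
  have h7 : ‖ee (t / q) ^ (q + 1) - ee (t / q) ^ 1‖ ≤ 2 := by
    refine (norm_sub_le _ _).trans ?_
    simp [ee_norm]; norm_num
  have h8 : ‖(1 / q : ℂ)‖ = 1 / q := by simp
  rw [h8, norm_div]
  calc (1 / q : ℝ) * (‖ee (t / q) ^ (q + 1) - ee (t / q) ^ 1‖ / ‖ee (t / q) - 1‖) 
      ≤ 1 / q * (2 / (4 * K / q)) := by gcongr
    _ = (1 / K) / 2 := by field_simp; norm_num
    _ ≤ 1 / K := by
      have : 0 < 1 / K := by positivity
      linarith

lemma aux_phi (P : Finset ℕ) (hP : ∀ q ∈ P, q.Prime) (hne : P.Nonempty) (t K : ℝ) (hK : 1 ≤ K)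
    (htK : K < |t|) :
    ‖(1 / P.card : ℂ) * ∑ q ∈ P, (1 / q : ℂ) * ∑ a ∈ Finset.Icc 1 q, ee (t * (a / q))‖ ≤
      1 / K + (2 * K + 1) * (Real.log (|t| + K) / Real.log 2) / P.card := by
  have hc : (0 : ℝ) < P.card := by exact_mod_cast hne.card_pos
  set f : ℕ → ℂ := fun q => (1 / q : ℂ) * ∑ a ∈ Finset.Icc 1 q, ee (t * (a / q)) with hf
  set B := P.filter (fun q : ℕ => |t - q * round (t / q)| ≤ K) with hB
  have hf1 : ∀ q ∈ P, ‖f q‖ ≤ 1 := by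
    intro q hq
    have : (0 : ℝ) < q := by exact_mod_cast (hP q hq).pos
    rw [hf]; simp only []
    rw [norm_mul]
    have h1 : ‖∑ a ∈ Finset.Icc 1 q, ee (t * (a / q))‖ ≤ q := by
      refine (norm_sum_le _ _).trans ?_
      simp [ee_norm]
    have h8 : ‖(1 / q : ℂ)‖ = 1 / q := by simp
    rw [h8]
    calc _ ≤ (1 / q : ℝ) * q := by gcongr
      _ = 1 := by field_simp
  have hpt : ∀ q ∈ P, ‖f q‖ ≤ 1 / K + (if q ∈ B then 1 else 0) := by
    intro q hq
    split_ifs with h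
    · have := hf1 q hq
      have : 0 < 1 / K := by positivity
      linarith [hf1 q hq]
    · rw [add_zero]
      apply aux_geom q (hP q hq).pos t K (by linarith)
      by_contra h'
      exact h (Finset.mem_filter.2 ⟨hq, not_lt.1 h'⟩)
  have hBP : B ⊆ P := Finset.filter_subset _ _
  have hsum : ‖∑ q ∈ P, f q‖ ≤ P.card * (1 / K) + B.card := by
    refine (norm_sum_le _ _).trans ((Finset.sum_le_sum hpt).trans ?_)
    rw [Finset.sum_add_distrib, Finset.sum_const, nsmul_eq_mul, Finset.sum_ite_mem,
      Finset.inter_eq_right.2 hBP]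
    simp
  set I := Finset.Icc ⌈t - K⌉ ⌊t + K⌋ with hI
  have hIm : ∀ m ∈ I, |(m : ℝ) - t| ≤ K := by
    intro m hm
    rw [hI, Finset.mem_Icc, Int.ceil_le, Int.le_floor] at hm
    rw [abs_le]; constructor <;> linarith [hm.1, hm.2]
  have hIcard : (I.card : ℝ) ≤ 2 * K + 1 := by
    rw [hI, Int.card_Icc]
    have h1 : ((⌊t + K⌋ + 1 - ⌈t - K⌉ : ℤ) : ℝ) ≤ 2 * K + 1 := by
      push_cast
      linarith [Int.floor_le (t + K), Int.le_ceil (t - K)]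
    have h2 : (((⌊t + K⌋ + 1 - ⌈t - K⌉).toNat : ℤ) : ℝ) ≤ 2 * K + 1 := by
      rw [Int.toNat_eq_max]; push_cast at h1 ⊢
      exact max_le h1 (by linarith)
    exact_mod_cast h2
  have hBsub : B ⊆ I.biUnion (fun m => P.filter (fun q : ℕ => (q : ℤ) ∣ m)) := by
    intro q hq
    rw [hB, Finset.mem_filter] at hq
    rw [Finset.mem_biUnion]
    refine ⟨q * round (t / q), ?_, Finset.mem_filter.2 ⟨hq.1, dvd_mul_right _ _⟩⟩
    have h := abs_le.1 hq.2
    rw [hI, Finset.mem_Icc, Int.ceil_le, Int.le_floor]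
    push_cast
    constructor <;> linarith [h.1, h.2]
  have hl2 : 0 < Real.log 2 := Real.log_pos (by norm_num)
  have hBcard : (B.card : ℝ) ≤ (2 * K + 1) * (Real.log (|t| + K) / Real.log 2) := by
    have h1 : (B.card : ℝ) ≤ ∑ m ∈ I, ((P.filter (fun q : ℕ => (q : ℤ) ∣ m)).card : ℝ) := by
      exact_mod_cast (Finset.card_le_card hBsub).trans Finset.card_biUnion_le
    refine h1.trans ?_
    have h2 : ∀ m ∈ I, ((P.filter (fun q : ℕ => (q : ℤ) ∣ m)).card : ℝ) ≤
        Real.log (|t| + K) / Real.log 2 := by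
      intro m hm
      have h3 := hIm m hm
      have hm0 : m ≠ 0 := by
        rintro rfl
        simp at h3; linarith
      refine (aux_count_s17 P hP m hm0).trans ?_
      have h4 : |(m : ℝ)| ≤ |t| + K := by
        have := abs_add_le t (m - t)
        simp only [add_sub_cancel] at this
        linarith
      have : 0 < |(m : ℝ)| := by positivity
      gcongr
    refine (Finset.sum_le_sum h2).trans ?_
    rw [Finset.sum_const, nsmul_eq_mul]
    gcongr
    apply div_nonneg (Real.log_nonneg (by linarith)) hl2.le
  rw [norm_mul]
  have h8 : ‖(1 / P.card : ℂ)‖ = 1 / P.card := by simp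
  rw [h8]
  calc _ ≤ (1 / P.card : ℝ) * (P.card * (1 / K) + (2 * K + 1) * (Real.log (|t| + K) / Real.log 2)) := by
        gcongr; linarith
    _ = _ := by field_simp

lemma ee_cont : Continuous ee := by unfold ee; fun_prop

lemma ee_sum (s : Finset ℕ) (f : ℕ → ℝ) : ee (∑ i ∈ s, f i) = ∏ i ∈ s, ee (f i) := by
  classical
  induction s using Finset.induction_on with
  | empty => simp [ee]
  | insert a s ha ih => rw [Finset.sum_insert ha, Finset.prod_insert ha, ee_add, ih]

lemma aux_seq (s : ℝ) (hs : 0 < s) : ∃ A N : ℕ → ℕ, A 0 = 2 ∧ ∀ j,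
    A (j + 1) = (2 * A j * N j) ^ (2 * (j + 2)) ∧ 2 ≤ N j ∧ 2 ≤ A j ∧
      (2 * Real.log (A (j + 1))) ^ s ≤ ((Nat.primesLE (N j)).card : ℝ) := by
  have h : ∀ j A : ℕ, ∃ N : ℕ, 2 ≤ N ∧ (1 ≤ A → ((4 * (j + 2) : ℕ) * Real.log (2 * A * N)) ^ s ≤
      ((Nat.primesLE N).card : ℝ)) := by
    intro j A
    by_cases hA : 1 ≤ A
    · obtain ⟨N, h1, h2⟩ := aux_primes s hs (4 * (j + 2)) A hA
      exact ⟨N, h1, fun _ => h2⟩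
    · exact ⟨2, le_rfl, fun h => absurd h hA⟩
  choose N0 hN0 hN1 using h
  let A : ℕ → ℕ := fun n => Nat.rec 2 (fun j a => (2 * a * N0 j a) ^ (2 * (j + 2))) n
  have hA1 : ∀ j, A (j + 1) = (2 * A j * N0 j (A j)) ^ (2 * (j + 2)) := fun j => rfl
  have hA2 : ∀ j, 2 ≤ A j := by
    intro j
    induction j with
    | zero => exact le_rfl
    | succ j ih =>
      rw [hA1]
      calc 2 ≤ 2 * A j * N0 j (A j) := by nlinarith [hN0 j (A j)]
        _ ≤ _ := Nat.le_self_pow (by omega) _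
  refine ⟨A, fun j => N0 j (A j), rfl, fun j => ⟨hA1 j, hN0 _ _, hA2 j, ?_⟩⟩
  refine le_trans (le_of_eq ?_) (hN1 j (A j) (by linarith [hA2 j]))
  rw [hA1]; push_cast; rw [Real.log_pow]; push_cast; congr 1; ring

lemma aux_liouville_s17 (A N : ℕ → ℕ) (hA : ∀ j, 2 ≤ A j) (hN : ∀ j, 2 ≤ N j)
    (hAN : ∀ j, A (j + 1) = (2 * A j * N j) ^ (2 * (j + 2))) (y : ℕ → ℝ)
    (hy : ∀ j, ∃ q a : ℕ, 1 ≤ q ∧ q ≤ N j ∧ 1 ≤ a ∧ a ≤ q ∧ y j = a / (A j * q)) :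
    Summable y ∧ Liouville (∑' j, y j) := by
  choose q a hq1 hqN ha1 haq hy using hy
  have hA0 : ∀ j, (0 : ℝ) < A j := fun j => by have := hA j; positivity
  have hq0 : ∀ j, (0 : ℝ) < q j := fun j => by have := hq1 j; positivity
  have ha0 : ∀ j, (0 : ℝ) < a j := fun j => by have := ha1 j; positivity
  have hy0 : ∀ j, 0 < y j := by
    intro j; rw [hy]; have := hA0 j; have := hq0 j; have := ha0 j; positivity
  have hyA : ∀ j, y j ≤ 1 / A j := by
    intro j; rw [hy, div_le_div_iff₀ (mul_pos (hA0 j) (hq0 j)) (hA0 j)]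
    have : (a j : ℝ) ≤ q j := by exact_mod_cast haq j
    nlinarith [hA0 j]
  have hdbl : ∀ j, 2 * A j * N j ≤ A (j + 1) := by
    intro j; rw [hAN]; exact Nat.le_self_pow (by omega) _
  have hdbl' : ∀ j, 2 * A j ≤ A (j + 1) := fun j => by nlinarith [hdbl j, hN j, hA j]
  have hgrow : ∀ j i, 2 ^ i * A j ≤ A (i + j) := by
    intro j i
    induction i with
    | zero => simp
    | succ i ih =>
      have := hdbl' (i + j)
      rw [show i + 1 + j = i + j + 1 by ring, pow_succ]; linarith
  have hyg : ∀ j i, y (i + j) ≤ (1 / A j) * (1 / 2) ^ i := by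
    intro j i
    refine (hyA _).trans ?_
    rw [one_div_pow, one_div_mul_one_div_rev]
    apply one_div_le_one_div_of_le (by have := hA0 j; positivity)
    exact_mod_cast hgrow j i
  have hgs : ∀ j, Summable (fun i : ℕ => (1 / (A j : ℝ)) * (1 / 2) ^ i) := fun j =>
    (summable_geometric_two).mul_left _
  have hsum : Summable y :=
    Summable.of_nonneg_of_le (fun i => (hy0 i).le) (fun i => hyg 0 i) (hgs 0)
  have htail : ∀ j, ∑' i, y (i + j) ≤ 2 / A j := by
    intro j
    refine (Summable.tsum_le_tsum (hyg j) ((summable_nat_add_iff j).2 hsum) (hgs j)).trans ?_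
    rw [tsum_mul_left, tsum_geometric_two]; apply le_of_eq; ring
  have htail0 : ∀ j, 0 < ∑' i, y (i + j) := fun j =>
    ((summable_nat_add_iff j).2 hsum).tsum_pos (fun i => (hy0 _).le) 0 (hy0 _)
  refine ⟨hsum, ?_⟩
  have hden : ∀ n, ∃ c : ℕ, 1 ≤ c ∧ c ≤ A n ∧ ∃ z : ℤ, (c : ℝ) * A n * ∑ i ∈ Finset.range n, y i = z := by
    intro n
    induction n with
    | zero => exact ⟨1, le_rfl, by linarith [hA 0], 0, by simp⟩
    | succ n ih =>
      obtain ⟨c, hc1, hc2, z, hz⟩ := ih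
      refine ⟨c * q n, Nat.mul_pos hc1 (hq1 n), ?_, ?_⟩
      · calc c * q n ≤ A n * N n := Nat.mul_le_mul hc2 (hqN n)
          _ ≤ 2 * A n * N n := by nlinarith [Nat.zero_le (A n * N n)]
          _ ≤ _ := hdbl n
      · have : A n ∣ A (n + 1) := by
          rw [hAN]
          exact dvd_pow (Dvd.intro_left 2 rfl |>.mul_right _) (by omega)
        obtain ⟨d, hd⟩ := this
        refine ⟨d * (q n * z + c * a n), ?_⟩
        rw [Finset.sum_range_succ, hd]
        push_cast
        rw [← hz, hy n]
        have := (hA0 n).ne'; have := (hq0 n).ne'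
        field_simp
  intro n
  obtain ⟨c, hc1, hc2, z, hz⟩ := hden n
  have hb : (2 : ℕ) ≤ c * q n * A n := by
    have := Nat.mul_pos hc1 (hq1 n); nlinarith [hA n]
  have hc0 : (0 : ℝ) < c := by positivity
  have hbR : (0 : ℝ) < ((c * q n * A n : ℕ) : ℝ) := by positivity
  have hs : ∑ i ∈ Finset.range (n + 1), y i =
      ((q n * z + c * a n : ℤ) : ℝ) / (((c * q n * A n : ℕ) : ℤ) : ℝ) := by
    rw [Int.cast_natCast, eq_div_iff hbR.ne', Finset.sum_range_succ]
    push_cast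
    rw [← hz, hy n]
    have := (hA0 n).ne'; have := (hq0 n).ne'
    field_simp
  have hx := hsum.sum_add_tsum_nat_add (n + 1)
  refine ⟨q n * z + c * a n, ((c * q n * A n : ℕ) : ℤ), by exact_mod_cast hb, ?_, ?_⟩
  · rw [← hs, ← hx]
    have := htail0 (n + 1)
    intro h; linarith
  · rw [← hs, ← hx, add_sub_cancel_left, abs_of_pos (htail0 (n + 1)), Int.cast_natCast]
    refine (htail (n + 1)).trans_lt ?_
    rw [div_lt_div_iff₀ (hA0 _) (by positivity), one_mul]
    have key : 2 * (c * q n * A n) ^ n < A (n + 1) := by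
      rw [hAN]
      have h1 : c * q n * A n ≤ (2 * A n * N n) ^ 2 := by
        calc c * q n * A n ≤ A n * N n * A n := by gcongr; exact hqN n
          _ ≤ (A n * N n) * (A n * N n) := by gcongr; nlinarith [hN n, hA n]
          _ ≤ _ := by nlinarith [Nat.zero_le (A n * N n * (A n * N n))]
      have h2 : 2 < (2 * A n * N n) ^ 4 := by
        have : 3 ≤ 2 * A n * N n := by nlinarith [hN n, hA n]
        calc 2 < 3 ^ 4 := by norm_num
          _ ≤ _ := by gcongr
      calc 2 * (c * q n * A n) ^ n ≤ 2 * ((2 * A n * N n) ^ 2) ^ n := by gcongr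
        _ < (2 * A n * N n) ^ 4 * ((2 * A n * N n) ^ 2) ^ n := by
            apply Nat.mul_lt_mul_of_pos_right h2
            have := hA n; have := hN n
            positivity
        _ = _ := by rw [← pow_mul, ← pow_add]; congr 1; ring
    exact_mod_cast key

lemma aux_fourier (ν : ℕ → Measure ℝ) [∀ i, IsProbabilityMeasure (ν i)]
    (hs : ∀ᵐ ω ∂(Measure.infinitePi ν), Summable ω) (ξ : ℝ) (j : ℕ) :
    ‖∫ ω, ee (ξ * ∑' i, ω i) ∂(Measure.infinitePi ν)‖ ≤ ‖∫ y, ee (ξ * y) ∂(ν j)‖ := by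
  have hlim : Tendsto (fun n : ℕ => ∫ ω, ee (ξ * ∑ i ∈ Finset.range n, ω i) ∂(Measure.infinitePi ν))
      atTop (nhds (∫ ω, ee (ξ * ∑' i, ω i) ∂(Measure.infinitePi ν))) := by
    apply tendsto_integral_of_dominated_convergence (fun _ => (1 : ℝ))
    · intro n
      apply Measurable.aestronglyMeasurable
      apply ee_cont.measurable.comp
      fun_prop
    · exact integrable_const _
    · intro n; filter_upwards with ω; rw [ee_norm]
    · filter_upwards [hs] with ω hω
      exact (ee_cont.tendsto _).comp (hω.hasSum.tendsto_sum_nat.const_mul ξ)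
  refine le_of_tendsto hlim.norm ?_
  filter_upwards [eventually_gt_atTop j] with n hn
  have hind := ProbabilityTheory.iIndepFun_infinitePi (P := ν) (X := fun _ (y : ℝ) => ee (ξ * y))
    (fun i => by exact ee_cont.measurable.comp (by fun_prop))
  have hind2 := hind.precomp (g := fun i : Fin n => (i : ℕ)) Fin.val_injective
  have h1 := hind2.integral_fun_prod_eq_prod_integral (fun i => by
    apply Measurable.aestronglyMeasurable
    exact ee_cont.measurable.comp (by fun_prop))
  have h2 : ∀ i, ∫ ω, ee (ξ * ω i) ∂(Measure.infinitePi ν) = ∫ y, ee (ξ * y) ∂(ν i) := by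
    intro i
    rw [← (measurePreserving_eval_infinitePi ν i).map_eq, integral_map]
    · exact (measurable_pi_apply i).aemeasurable
    · exact (ee_cont.measurable.comp (by fun_prop)).aestronglyMeasurable
  have h3 : ∀ ω : ℕ → ℝ, ee (ξ * ∑ i ∈ Finset.range n, ω i) = ∏ i : Fin n, ee (ξ * ω i) := by
    intro ω
    rw [Finset.mul_sum, ee_sum, Finset.prod_range]
  simp_rw [h3]
  rw [h1]
  simp_rw [h2]
  rw [norm_prod, ← Finset.mul_prod_erase _ _ (Finset.mem_univ (⟨j, hn⟩ : Fin n))]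
  apply mul_le_of_le_one_right (norm_nonneg _)
  apply Finset.prod_le_one
  · intro i _; exact norm_nonneg _
  · intro i _
    refine (norm_integral_le_integral_norm _).trans ?_
    simp [ee_norm]

/-- The law of one summand. -/
noncomputable def nu (P : Finset ℕ) (A : ℕ) : Measure ℝ :=
  ∑ q ∈ P, ∑ a ∈ Finset.Icc 1 q,
    ENNReal.ofReal (1 / (P.card : ℝ) * (1 / q)) • Measure.dirac ((a : ℝ) / (A * q))

lemma nu_prob (P : Finset ℕ) (A : ℕ) (hP : ∀ q ∈ P, 1 ≤ q) (hne : P.Nonempty) :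
    IsProbabilityMeasure (nu P A) := by
  constructor
  have hc : (0 : ℝ) < P.card := by exact_mod_cast hne.card_pos
  simp only [nu, Measure.coe_finsetSum, Finset.sum_apply, Measure.smul_apply, measure_univ,
    smul_eq_mul, mul_one, Finset.sum_const, Nat.card_Icc, nsmul_eq_mul]
  have : ∀ q ∈ P, ((q + 1 - 1 : ℕ) : ENNReal) * ENNReal.ofReal (1 / (P.card : ℝ) * (1 / q)) =
      ENNReal.ofReal (1 / (P.card : ℝ)) := by
    intro q hq
    have hq0 : (0 : ℝ) < q := by exact_mod_cast hP q hq
    rw [Nat.add_sub_cancel, ← ENNReal.ofReal_natCast, ← ENNReal.ofReal_mul (by positivity)]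
    congr 1; field_simp
  rw [Finset.sum_congr rfl this, Finset.sum_const, nsmul_eq_mul, ← ENNReal.ofReal_natCast,
    ← ENNReal.ofReal_mul (by positivity), mul_one_div_cancel hc.ne', ENNReal.ofReal_one]

lemma nu_ae (P : Finset ℕ) (A : ℕ) : ∀ᵐ y : ℝ ∂(nu P A), ∃ q ∈ P, ∃ a : ℕ, 1 ≤ a ∧ a ≤ q ∧
    y = a / (A * q) := by
  rw [ae_iff]
  simp only [nu, Measure.coe_finsetSum, Finset.sum_apply, Measure.smul_apply, smul_eq_mul]
  apply Finset.sum_eq_zero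
  intro q hq
  apply Finset.sum_eq_zero
  intro a ha
  rw [Finset.mem_Icc] at ha
  rw [Measure.dirac_apply, Set.indicator_of_notMem, mul_zero]
  simp only [Set.mem_ofPred_eq, not_not]
  exact ⟨q, hq, a, ha.1, ha.2, rfl⟩

lemma nu_integral (P : Finset ℕ) (A : ℕ) (ξ : ℝ) : ∫ y, ee (ξ * y) ∂(nu P A) =
    (1 / P.card : ℂ) * ∑ q ∈ P, (1 / q : ℂ) * ∑ a ∈ Finset.Icc 1 q, ee (ξ / A * (a / q)) := by
  have hi : ∀ (q a : ℕ), Integrable (fun y => ee (ξ * y))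
      (ENNReal.ofReal (1 / (P.card : ℝ) * (1 / q)) • Measure.dirac ((a : ℝ) / (A * q))) := by
    intro q a
    apply Integrable.smul_measure _ ENNReal.ofReal_ne_top
    apply integrable_dirac
    simp
  unfold nu
  rw [integral_finsetSum_measure, Finset.mul_sum]
  · apply Finset.sum_congr rfl
    intro q hq
    rw [integral_finsetSum_measure (fun a _ => hi q a), ← mul_assoc, Finset.mul_sum]
    apply Finset.sum_congr rfl
    intro a ha
    rw [integral_smul_measure, integral_dirac, ENNReal.toReal_ofReal (by positivity),
      Complex.real_smul]
    push_cast
    congr 2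
    ring
  · intro q hq
    exact integrable_finsetSum_measure.2 (fun a _ => hi q a)

theorem stmt17 (p : ℝ) (hp : 0 < p) :
    ∃ μ : Measure ℝ, IsProbabilityMeasure μ ∧ μ {x : ℝ | Liouville x}ᶜ = 0 ∧
      ∃ C > (0 : ℝ), ∃ M > Real.exp 1,
        ∀ ξ : ℝ, M ≤ |ξ| → ‖fourierT μ ξ‖ ≤ C * (Real.log |ξ|) ^ (-p) := by
  obtain ⟨A, N, hA0, hAN⟩ := aux_seq (2 * p + 1) (by linarith)
  have hA : ∀ j, 2 ≤ A j := fun j => (hAN j).2.2.1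
  have hN : ∀ j, 2 ≤ N j := fun j => (hAN j).2.1
  have hne : ∀ j, (Nat.primesLE (N j)).Nonempty := fun j =>
    ⟨2, Nat.mem_primesLE.2 ⟨hN j, Nat.prime_two⟩⟩
  have hpr : ∀ j, ∀ q ∈ Nat.primesLE (N j), q.Prime := fun j q hq => (Nat.mem_primesLE.1 hq).2
  let ν : ℕ → Measure ℝ := fun j => nu (Nat.primesLE (N j)) (A j)
  have : ∀ j, IsProbabilityMeasure (ν j) := fun j =>
    nu_prob _ _ (fun q hq => (hpr j q hq).one_le) (hne j)
  have hae : ∀ᵐ ω ∂(Measure.infinitePi ν), Summable ω ∧ Liouville (∑' j, ω j) := by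
    have h : ∀ᵐ ω ∂(Measure.infinitePi ν), ∀ j, ∃ q ∈ Nat.primesLE (N j), ∃ a : ℕ,
        1 ≤ a ∧ a ≤ q ∧ ω j = (a : ℝ) / (A j * q) := by
      rw [ae_all_iff]
      intro j
      exact (measurePreserving_eval_infinitePi ν j).quasiMeasurePreserving.ae
        (nu_ae (Nat.primesLE (N j)) (A j))
    filter_upwards [h] with ω hω
    apply aux_liouville_s17 A N hA hN (fun j => (hAN j).1)
    intro j
    obtain ⟨q, hq, a, h1, h2, h3⟩ := hω j
    exact ⟨q, a, (hpr j q hq).one_le, (Nat.mem_primesLE.1 hq).1, h1, h2, h3⟩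
  have hX : Measurable (fun ω : ℕ → ℝ => ∑' i, ω i) := Measurable.tsum (fun i => by fun_prop)
  have hlo := (isLittleO_log_rpow_rpow_atTop p (show (0 : ℝ) < 1 / 2 by norm_num)).bound
    (c := 1 / 2) (by norm_num)
  obtain ⟨M0, hM0⟩ := eventually_atTop.1 hlo
  refine ⟨(Measure.infinitePi ν).map (fun ω => ∑' i, ω i),
    Measure.isProbabilityMeasure_map hX.aemeasurable, ?_, 10, by norm_num, max M0 4,
    lt_max_of_lt_right (by linarith [Real.exp_one_lt_d9]), ?_⟩
  · have : ∀ᵐ x ∂((Measure.infinitePi ν).map (fun ω => ∑' i, ω i)), Liouville x := by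
      rw [ae_map_iff hX.aemeasurable IsGδ.setOfPred_liouville.measurableSet]
      filter_upwards [hae] with ω hω using hω.2
    exact this
  · intro ξ hξ
    set x := |ξ| with hx
    have hx4 : 4 ≤ x := (le_max_right _ _).trans hξ
    have hxM : M0 ≤ x := (le_max_left _ _).trans hξ
    set L := Real.log x with hL
    have hL1 : 1 ≤ L := by
      rw [hL, Real.le_log_iff_exp_le (by linarith)]
      linarith [Real.exp_one_lt_d9]
    have hL0 : 0 < L := by linarith
    have hex : ∃ n, x < (A n : ℝ) ^ 2 := by
      have hg : ∀ n, n ≤ A n := by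
        intro n
        induction n with
        | zero => exact Nat.zero_le _
        | succ n ih =>
          rw [(hAN n).1]
          calc n + 1 ≤ 2 * A n * N n := by nlinarith [hA n, hN n]
            _ ≤ _ := Nat.le_self_pow (by omega) _
      obtain ⟨n, hn⟩ := exists_nat_gt x
      refine ⟨n, hn.trans_le ?_⟩
      have h1 : (n : ℝ) ≤ A n := by exact_mod_cast hg n
      have h2 : (2 : ℝ) ≤ A n := by exact_mod_cast hA n
      nlinarith
    obtain ⟨j, hj1, hj2⟩ : ∃ j, (A j : ℝ) ^ 2 ≤ x ∧ x < (A (j + 1) : ℝ) ^ 2 := by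
      classical
      have h0 : Nat.find hex ≠ 0 := by
        intro h
        have := Nat.find_spec hex
        rw [h, hA0] at this
        norm_num at this
        linarith
      obtain ⟨j, hj⟩ := Nat.exists_eq_succ_of_ne_zero h0
      refine ⟨j, not_lt.1 (Nat.find_min hex (by omega)), ?_⟩
      have := Nat.find_spec hex
      rw [hj] at this
      exact this
    have hAj : (2 : ℝ) ≤ A j := by exact_mod_cast hA j
    have hAj1 : (2 : ℝ) ≤ A (j + 1) := by exact_mod_cast hA (j + 1)
    have hfour : fourierT ((Measure.infinitePi ν).map (fun ω => ∑' i, ω i)) ξ =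
        ∫ ω, ee (ξ * ∑' i, ω i) ∂(Measure.infinitePi ν) := by
      have h1 : ∀ y : ℝ, Complex.exp (((-2 * Real.pi * ξ * y : ℝ) : ℂ) * Complex.I) =
          ee (ξ * y) := by
        intro y; unfold ee; rw [mul_assoc (-2 * Real.pi)]
      unfold fourierT
      simp_rw [h1]
      rw [integral_map hX.aemeasurable]
      exact (ee_cont.measurable.comp (by fun_prop)).aestronglyMeasurable
    rw [hfour]
    refine (aux_fourier ν (hae.mono fun ω h => h.1) ξ j).trans ?_
    show ‖∫ y, ee (ξ * y) ∂(nu (Nat.primesLE (N j)) (A j))‖ ≤ _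
    rw [nu_integral]
    have hK1 : 1 ≤ L ^ p := Real.one_le_rpow hL1 hp.le
    have hxs : x ^ (1 / 2 : ℝ) = Real.sqrt x := (Real.sqrt_eq_rpow x).symm
    have hsx : 0 < Real.sqrt x := Real.sqrt_pos.2 (by linarith)
    have hss := Real.mul_self_sqrt (show 0 ≤ x by linarith)
    have htabs : |ξ / A j| = x / A j := by
      rw [abs_div, Nat.abs_cast]
    have hKt : L ^ p < |ξ / A j| := by
      have h1 := hM0 x hxM
      rw [hxs, Real.norm_eq_abs, Real.norm_eq_abs, abs_of_pos hsx] at h1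
      have h2 := (le_abs_self _).trans h1
      have h3 : (A j : ℝ) ≤ Real.sqrt x := Real.le_sqrt_of_sq_le hj1
      rw [htabs, lt_div_iff₀ (by linarith)]
      change L ^ p ≤ _ at h2
      nlinarith
    refine (aux_phi _ (hpr j) (hne j) (ξ / A j) (L ^ p) hK1 hKt).trans ?_
    have hr : L ^ (2 * p + 1) ≤ ((Nat.primesLE (N j)).card : ℝ) := by
      refine le_trans ?_ (hAN j).2.2.2
      apply Real.rpow_le_rpow hL0.le _ (by linarith)
      have := Real.log_le_log (by linarith) hj2.le
      rw [Real.log_pow] at this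
      exact_mod_cast this
    have hlog : Real.log (|ξ / A j| + L ^ p) / Real.log 2 ≤ 3 * L := by
      have hl2 := Real.log_two_gt_d9
      rw [div_le_iff₀ (by linarith)]
      have h1 : |ξ / A j| ≤ x := by
        rw [htabs]; apply div_le_self (by linarith) (by linarith)
      have h2 : Real.log (|ξ / A j| + L ^ p) ≤ Real.log (2 * x) := by
        apply Real.log_le_log (by linarith) (by linarith)
      rw [Real.log_mul (by norm_num) (by linarith)] at h2
      nlinarith
    have hLs : L ^ (2 * p + 1) = L ^ p * L ^ p * L := by
      rw [Real.rpow_add hL0, Real.rpow_one, two_mul, Real.rpow_add hL0]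
    have hKpos : 0 < L ^ p := by linarith
    have hfin : (2 * L ^ p + 1) * (Real.log (|ξ / A j| + L ^ p) / Real.log 2) /
        ((Nat.primesLE (N j)).card : ℝ) ≤ 9 / L ^ p := by
      calc _ ≤ (3 * L ^ p) * (3 * L) / (L ^ p * L ^ p * L) := by
            rw [← hLs]
            apply div_le_div₀ (by positivity) _ (by positivity) hr
            apply mul_le_mul (by linarith) hlog _ (by linarith)
            apply div_nonneg (Real.log_nonneg (by linarith)) (Real.log_nonneg (by norm_num))
        _ = _ := by field_simp; norm_num
    rw [Real.rpow_neg hL0.le]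
    calc _ ≤ 1 / L ^ p + 9 / L ^ p := by gcongr
      _ = _ := by field_simp; norm_num
end
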